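/- arXiv:1912.07194 — 3 statements merged into one kernel-verified Lean document; each statement's English description precedes it below -/
import Mathlib

section
/- Let A^(1), …, A^(L) ∈ ℝ^{n×n} be symmetric matrices and let f(Q) = Σ_{ℓ=1}^L Σ_{k=1}^n ((Q^T A^(ℓ) Q)_{kk})². Then for any starting point Q₀ ∈ O(n), every Jacobi-G sequence {Q_k} for f converges to a single limit point Q* ∈ O(n), and Q* is a stationary point of f restricted to O(n), i.e. ProjGrad f(Q*) = 0. -/
open Matrix BigOperators Filter

/-- Frobenius norm of a real matrix. -/
noncomputable def frobR {n : ℕ} (A : Matrix (Fin n) (Fin n) ℝ) : ℝ :=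
  Real.sqrt (∑ i, ∑ j, (A i j) ^ 2)

/-- `g` is the Euclidean gradient of `f : ℝ^{n×n} → ℝ`. -/
def IsGradR {n : ℕ} (f : Matrix (Fin n) (Fin n) ℝ → ℝ)
    (g : Matrix (Fin n) (Fin n) ℝ → Matrix (Fin n) (Fin n) ℝ) : Prop :=
  ∀ Q H, HasDerivAt (fun t : ℝ => f (Q + t • H)) (∑ i, ∑ j, g Q i j * H i j) 0

/-- Riemannian (projected) gradient on O(n): `Q (Λ - Λᵀ)/2` with `Λ = Qᵀ ∇f(Q)`. -/
noncomputable def projGradR {n : ℕ}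
    (g : Matrix (Fin n) (Fin n) ℝ → Matrix (Fin n) (Fin n) ℝ)
    (Q : Matrix (Fin n) (Fin n) ℝ) : Matrix (Fin n) (Fin n) ℝ :=
  Q * ((1 / 2 : ℝ) • (Qᵀ * g Q - (Qᵀ * g Q)ᵀ))

/-- Givens rotation `G(i,j,θ)`: identity except `G_{ii} = G_{jj} = cos θ`,
`G_{ij} = −sin θ`, `G_{ji} = sin θ`. -/
noncomputable def givensR (n : ℕ) (i j : Fin n) (θ : ℝ) : Matrix (Fin n) (Fin n) ℝ :=
  fun a b =>
    if a = i ∧ b = i then Real.cos θ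
    else if a = j ∧ b = j then Real.cos θ
    else if a = i ∧ b = j then -Real.sin θ
    else if a = j ∧ b = i then Real.sin θ
    else if a = b then 1 else 0


open Polynomial in
/-- Monic polynomials split when every smaller monic polynomial has a root. -/
lemma jg_split {S : Type*} [CommRing S] [Nontrivial S] (d : ℕ)
    (hroot : ∀ q : S[X], q.Monic → 0 < q.natDegree → q.natDegree < d → ∃ a, q.IsRoot a) :
    ∀ (k : ℕ) (q : S[X]), q.Monic → q.natDegree = k → k < d →
      ∃ m : Multiset S, q = (m.map fun a => X - C a).prod := by
  intro k
  induction k with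
  | zero =>
    intro q hq hk _
    refine ⟨0, ?_⟩
    simpa using hq.natDegree_eq_zero.mp hk
  | succ k ih =>
    intro q hq hk hd
    obtain ⟨a, ha⟩ := hroot q hq (by omega) (by omega)
    obtain ⟨r, hr⟩ := dvd_iff_isRoot.mpr ha
    have hrm : r.Monic := by
      have := (monic_X_sub_C a).of_mul_monic_left (q := r) (by rw [← hr]; exact hq)
      exact this
    have hdeg : q.natDegree = 1 + r.natDegree := by
      rw [hr, (monic_X_sub_C a).natDegree_mul hrm, natDegree_X_sub_C]
    obtain ⟨m, hm⟩ := ih r hrm (by omega) (by omega)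
    exact ⟨a ::ₘ m, by rw [Multiset.map_cons, Multiset.prod_cons, ← hm, hr]⟩

/-- Nonarchimedean absolute values, trivial on the constants. -/
structure JgNA {L : Type*} [Field L] [Algebra ℂ L] (v : AbsoluteValue L ℝ) : Prop where
  na : ∀ a b, v (a + b) ≤ max (v a) (v b)
  triv : ∀ c : ℂ, c ≠ 0 → v (algebraMap ℂ L c) = 1

section Dual

variable {L : Type*} [Field L] [Algebra ℂ L] {v : AbsoluteValue L ℝ}

lemma JgNA.const_le (hv : JgNA v) (c : ℂ) : v (algebraMap ℂ L c) ≤ 1 := by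
  by_cases h : c = 0
  · simp [h]
  · exact (hv.triv c h).le

lemma JgNA.sub (hv : JgNA v) (a b : L) : v (a - b) ≤ max (v a) (v b) := by
  have := hv.na a (-b)
  rwa [← sub_eq_add_neg, v.map_neg] at this

lemma JgNA.const_mul (hv : JgNA v) (c : ℂ) (a : L) : v (algebraMap ℂ L c * a) ≤ v a := by
  rw [v.map_mul]
  exact mul_le_of_le_one_left (v.nonneg a) (hv.const_le c)

lemma JgNA.sum_le (hv : JgNA v) {ι : Type*} (s : Finset ι) (u : ι → L) (B : ℝ) (hB : 0 ≤ B)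
    (h : ∀ i ∈ s, v (u i) ≤ B) : v (∑ i ∈ s, u i) ≤ B := by
  classical
  induction s using Finset.induction_on with
  | empty => simpa using hB
  | insert a s ha ih =>
    rw [Finset.sum_insert ha]
    exact (hv.na _ _).trans (max_le (h a (by simp)) (ih fun i hi => h i (by simp [hi])))

lemma JgNA.sum_lt (hv : JgNA v) {ι : Type*} (s : Finset ι) (u : ι → L) (B : ℝ) (hB : 0 < B)
    (h : ∀ i ∈ s, v (u i) < B) : v (∑ i ∈ s, u i) < B := by
  classical
  induction s using Finset.induction_on with
  | empty => simpa using hB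
  | insert a s ha ih =>
    rw [Finset.sum_insert ha]
    exact (hv.na _ _).trans_lt (max_lt (h a (by simp)) (ih fun i hi => h i (by simp [hi])))

/-- The real number `r` as a constant of `L`. -/
noncomputable def jgR (L : Type*) [Field L] [Algebra ℂ L] (r : ℝ) : L := algebraMap ℂ L (r : ℂ)

lemma jgR_add (r s : ℝ) : jgR L (r + s) = jgR L r + jgR L s := by simp [jgR]

/-- Compatible pairs (an element together with its derivative). -/
def JgGood (v : AbsoluteValue L ℝ) (s : DualNumber L) : Prop :=
  (s.fst = 0 → s.snd = 0) ∧
    (s.fst ≠ 0 → v (s.snd - jgR L (Real.log (v s.fst)) * s.fst) < v s.fst)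

/-- Compatible pairs at level `M`. -/
def JgLev (v : AbsoluteValue L ℝ) (M : ℝ) (s : DualNumber L) : Prop :=
  v s.fst ≤ M ∧ v (s.snd - jgR L (Real.log M) * s.fst) < M

lemma dn_snd_mul (s t : DualNumber L) : (s * t).snd = s.fst * t.snd + s.snd * t.fst := by
  rw [TrivSqZeroExt.snd_mul, smul_eq_mul, MulOpposite.smul_eq_mul_unop, MulOpposite.unop_op]

lemma dn_fst_mul (s t : DualNumber L) : (s * t).fst = s.fst * t.fst := TrivSqZeroExt.fst_mul s t

lemma JgGood.mul {s t : DualNumber L} (hv : JgNA v) (hs : JgGood v s) (ht : JgGood v t) :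
    JgGood v (s * t) := by
  obtain ⟨hs0, hs1⟩ := hs
  obtain ⟨ht0, ht1⟩ := ht
  refine ⟨fun h => ?_, fun h => ?_⟩
  · rw [dn_fst_mul] at h
    rw [dn_snd_mul]
    rcases mul_eq_zero.mp h with h | h
    · rw [h, hs0 h]; ring
    · rw [h, ht0 h]; ring
  · rw [dn_fst_mul] at h ⊢
    rw [dn_snd_mul]
    have ha := left_ne_zero_of_mul h
    have hb := right_ne_zero_of_mul h
    have va := v.pos ha
    have vb := v.pos hb
    rw [v.map_mul, Real.log_mul va.ne' vb.ne', jgR_add]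
    have e : s.fst * t.snd + s.snd * t.fst -
        (jgR L (Real.log (v s.fst)) + jgR L (Real.log (v t.fst))) * (s.fst * t.fst) =
        s.fst * (t.snd - jgR L (Real.log (v t.fst)) * t.fst) +
        (s.snd - jgR L (Real.log (v s.fst)) * s.fst) * t.fst := by ring
    rw [e]
    refine (hv.na _ _).trans_lt (max_lt ?_ ?_)
    · rw [v.map_mul]; exact mul_lt_mul_of_pos_left (ht1 hb) va
    · rw [v.map_mul]; exact mul_lt_mul_of_pos_right (hs1 ha) vb

lemma JgGood.cancel {s t : DualNumber L} (hv : JgNA v) (hs : JgGood v (s * t)) (ht : JgGood v t)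
    (h0 : t.fst ≠ 0) : JgGood v s := by
  obtain ⟨hs0, hs1⟩ := hs
  obtain ⟨ht0, ht1⟩ := ht
  rw [dn_fst_mul, dn_snd_mul] at hs0 hs1
  refine ⟨fun h => ?_, fun ha => ?_⟩
  · have := hs0 (by rw [h, zero_mul])
    rw [h, zero_mul, zero_add] at this
    exact (mul_eq_zero.mp this).resolve_right h0
  · have va := v.pos ha
    have vb := v.pos h0
    have h1 := hs1 (mul_ne_zero ha h0)
    rw [v.map_mul, Real.log_mul va.ne' vb.ne', jgR_add] at h1
    have e : (s.snd - jgR L (Real.log (v s.fst)) * s.fst) * t.fst =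
        (s.fst * t.snd + s.snd * t.fst -
        (jgR L (Real.log (v s.fst)) + jgR L (Real.log (v t.fst))) * (s.fst * t.fst)) -
        s.fst * (t.snd - jgR L (Real.log (v t.fst)) * t.fst) := by ring
    have h2 := hv.sub (s.fst * t.snd + s.snd * t.fst -
        (jgR L (Real.log (v s.fst)) + jgR L (Real.log (v t.fst))) * (s.fst * t.fst))
        (s.fst * (t.snd - jgR L (Real.log (v t.fst)) * t.fst))
    rw [← e] at h2
    have h3 := h2.trans_lt (max_lt h1 (by
      rw [v.map_mul]; exact mul_lt_mul_of_pos_left (ht1 h0) va))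
    rw [v.map_mul] at h3
    exact lt_of_mul_lt_mul_right h3 vb.le

lemma JgGood.const (hv : JgNA v) (c : ℂ) : JgGood v (algebraMap ℂ (DualNumber L) c) := by
  have e1 : (algebraMap ℂ (DualNumber L) c).fst = algebraMap ℂ L c := by
    rfl
  have e2 : (algebraMap ℂ (DualNumber L) c).snd = 0 := by
    rfl
  refine ⟨fun _ => e2, fun h => ?_⟩
  rw [e1] at h ⊢
  rw [e2]
  have : c ≠ 0 := by rintro rfl; simp at h
  rw [hv.triv c this]
  simp [jgR]

lemma JgGood.lev {s : DualNumber L} (hv : JgNA v) (hs : JgGood v s) {M : ℝ} (hM : 0 < M)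
    (h : v s.fst ≤ M) : JgLev v M s := by
  refine ⟨h, ?_⟩
  by_cases h0 : s.fst = 0
  · rw [h0, hs.1 h0]; simpa using hM
  · have h1 := hs.2 h0
    rcases h.lt_or_eq with h | h
    · have e : s.snd - jgR L (Real.log M) * s.fst =
        (s.snd - jgR L (Real.log (v s.fst)) * s.fst) +
          (jgR L (Real.log (v s.fst)) * s.fst - jgR L (Real.log M) * s.fst) := by ring
      rw [e]
      refine (hv.na _ _).trans_lt (max_lt (h1.trans h) ?_)
      exact (hv.sub _ _).trans_lt (max_lt ((hv.const_mul _ _).trans_lt h)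
        ((hv.const_mul _ _).trans_lt h))
    · rwa [h] at h1

lemma JgLev.good {s : DualNumber L} {M : ℝ} (hM : 0 < M) (hs : JgLev v M s) (h : v s.fst = M) :
    JgGood v s := by
  refine ⟨fun h0 => ?_, fun _ => ?_⟩
  · rw [h0] at h; simp at h; linarith
  · rw [h]; exact hs.2

lemma JgLev.add {s t : DualNumber L} {M : ℝ} (hv : JgNA v) (hs : JgLev v M s)
    (ht : JgLev v M t) : JgLev v M (s + t) := by
  refine ⟨?_, ?_⟩
  · rw [TrivSqZeroExt.fst_add]; exact (hv.na _ _).trans (max_le hs.1 ht.1)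
  · rw [TrivSqZeroExt.fst_add, TrivSqZeroExt.snd_add]
    have e : s.snd + t.snd - jgR L (Real.log M) * (s.fst + t.fst) =
      (s.snd - jgR L (Real.log M) * s.fst) + (t.snd - jgR L (Real.log M) * t.fst) := by ring
    rw [e]
    exact (hv.na _ _).trans_lt (max_lt hs.2 ht.2)

lemma JgLev.sum {M : ℝ} (hv : JgNA v) (hM : 0 < M) {ι : Type*} (s : Finset ι)
    (u : ι → DualNumber L) (h : ∀ i ∈ s, JgLev v M (u i)) : JgLev v M (∑ i ∈ s, u i) := by
  classical
  induction s using Finset.induction_on with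
  | empty => simpa [JgLev] using ⟨hM.le, hM⟩
  | insert a s ha ih =>
    rw [Finset.sum_insert ha]
    exact (h a (by simp)).add hv (ih fun i hi => h i (by simp [hi]))

/-- Nestedness of the balls. -/
lemma JgGood.nest {ξ a b : DualNumber L} (hv : JgNA v) (hb : JgGood v (ξ - b))
    (hab : JgGood v (b - a)) (h0 : ξ.fst ≠ a.fst)
    (h : v (ξ.fst - b.fst) ≤ v (ξ.fst - a.fst)) : JgGood v (ξ - a) := by
  have hM : 0 < v (ξ.fst - a.fst) := v.pos (sub_ne_zero.mpr h0)
  have h1 : JgLev v (v (ξ.fst - a.fst)) (ξ - b) := hb.lev hv hM (by simpa using h)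
  have h2 : JgLev v (v (ξ.fst - a.fst)) (b - a) := by
    refine hab.lev hv hM ?_
    have := hv.sub (ξ.fst - a.fst) (ξ.fst - b.fst)
    rw [max_eq_left h] at this
    have e : (b - a).fst = ξ.fst - a.fst - (ξ.fst - b.fst) := by
      rw [TrivSqZeroExt.fst_sub]; ring
    rw [e]; exact this
  have h3 := h1.add hv h2
  rw [sub_add_sub_cancel] at h3
  exact h3.good hM (by simp)

lemma JgGood.pow {s : DualNumber L} (hv : JgNA v) (hs : JgGood v s) (k : ℕ) :
    JgGood v (s ^ k) := by
  induction k with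
  | zero =>
    rw [pow_zero, ← map_one (algebraMap ℂ (DualNumber L))]; exact JgGood.const hv 1
  | succ k ih => rw [pow_succ]; exact ih.mul hv hs

lemma JgGood.multiset_prod (hv : JgNA v) (m : Multiset (DualNumber L))
    (h : ∀ s ∈ m, JgGood v s) : JgGood v m.prod := by
  induction m using Multiset.induction_on with
  | empty =>
    rw [Multiset.prod_zero, ← map_one (algebraMap ℂ (DualNumber L))]; exact JgGood.const hv 1
  | cons a m ih =>
    rw [Multiset.prod_cons]
    exact (h a (by simp)).mul hv (ih fun s hs => h s (by simp [hs]))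

open Polynomial in
/-- Gauss norm bound of a split polynomial. -/
lemma jg_gauss (hv : JgNA v) (r : ℝ) (hr : 0 ≤ r) (x a : L) (m : Multiset L)
    (h1 : ∀ s ∈ m, r ≤ v (x - s)) (h2 : v (x - a) ≤ r) (j : ℕ) :
    v (((m.map fun s => (X - C (s - a) : L[X])).prod).coeff j) * r ^ j ≤
      v ((m.map fun s => x - s).prod) := by
  induction m using Multiset.induction_on generalizing j with
  | empty =>
    by_cases hj : j = 0
    · subst hj; simp
    · simp [coeff_one, hj]
  | cons s m ih =>
    have ih' := ih (fun s hs => h1 s (by simp [hs]))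
    have hs := h1 s (by simp)
    rw [Multiset.map_cons, Multiset.prod_cons, Multiset.map_cons, Multiset.prod_cons, v.map_mul]
    set P := (m.map fun s => (X - C (s - a) : L[X])).prod
    set B := v ((m.map fun s => x - s).prod)
    have hsa : v (s - a) ≤ v (x - s) := by
      have e : s - a = (x - a) - (x - s) := by ring
      rw [e]
      exact (hv.sub _ _).trans (max_le (h2.trans hs) le_rfl)
    have key : ∀ j, v ((s - a) * P.coeff j) * r ^ j ≤ v (x - s) * B := by
      intro j
      rw [v.map_mul, mul_assoc]
      exact mul_le_mul hsa (ih' j) (mul_nonneg (v.nonneg _) (pow_nonneg hr _)) (v.nonneg _)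
    cases j with
    | zero =>
      have e : ((X - C (s - a)) * P).coeff 0 = - ((s - a) * P.coeff 0) := by
        simp [sub_mul]
      rw [e, v.map_neg]
      exact key 0
    | succ j =>
      have e : ((X - C (s - a)) * P).coeff (j + 1) = P.coeff j - (s - a) * P.coeff (j + 1) := by
        rw [sub_mul, coeff_sub, coeff_X_mul, coeff_C_mul]
      rw [e]
      refine (mul_le_mul_of_nonneg_right (hv.sub _ _) (pow_nonneg hr _)).trans ?_
      rw [max_mul_of_nonneg _ _ (pow_nonneg hr _)]
      refine max_le ?_ (key (j + 1))
      rw [pow_succ, ← mul_assoc, mul_comm (v (x - s))]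
      exact mul_le_mul (ih' j) hs hr (v.nonneg _)

end Dual

section Ext

variable {L : Type*} [Field L] [Algebra ℂ L] {v : AbsoluteValue L ℝ}

/-- projection to the first component -/
noncomputable def jgPi (S : Subalgebra ℂ (DualNumber L)) : S →+* L :=
  ((TrivSqZeroExt.fstHom ℂ L L : DualNumber L →ₐ[ℂ] L) : DualNumber L →+* L).comp
    (algebraMap S (DualNumber L))

lemma jgPi_apply (S : Subalgebra ℂ (DualNumber L)) (a : S) :
    jgPi S a = (a : DualNumber L).fst := rfl

open Polynomial in
lemma jg_fst_aeval (S : Subalgebra ℂ (DualNumber L)) (ξ : DualNumber L) (p : S[X]) :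
    (aeval ξ p).fst = (p.map (jgPi S)).eval ξ.fst := by
  rw [aeval_def, eval_map]
  exact hom_eval₂ p (algebraMap S (DualNumber L))
    ((TrivSqZeroExt.fstHom ℂ L L : DualNumber L →ₐ[ℂ] L) : DualNumber L →+* L) ξ

lemma jg_natCast (hv : JgNA v) (k : ℕ) : v ((k + 1 : ℕ) : L) = 1 := by
  have := hv.triv ((k + 1 : ℕ) : ℂ) (by exact_mod_cast Nat.succ_ne_zero k)
  rwa [map_natCast] at this

open Polynomial in
lemma jg_alg_ball (hv : JgNA v) (S : Subalgebra ℂ (DualNumber L)) (hS : ∀ s ∈ S, JgGood v s)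
    (ξ : DualNumber L) (p : S[X]) (hp : aeval ξ p = 0) (a lc : S) (m : Multiset S)
    (hd : derivative p = C lc * (m.map fun s => X - C s).prod)
    (hm : ∀ s ∈ m, v (ξ.fst - jgPi S a) ≤ v (ξ.fst - jgPi S s))
    (hxa : ξ.fst ≠ jgPi S a) (hne : ((derivative p).map (jgPi S)).eval ξ.fst ≠ 0) :
    JgGood v (ξ - (a : DualNumber L)) := by
  set π := jgPi S with hπ
  set y := ξ.fst - π a with hy
  have hy0 : y ≠ 0 := sub_ne_zero.mpr hxa
  set r := v y with hr
  have hr0 : 0 < r := v.pos hy0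
  set η : DualNumber L := TrivSqZeroExt.inl y + TrivSqZeroExt.inr (jgR L (Real.log r) * y) with hη
  have hη1 : η.fst = y := by simp [hη]
  have hη2 : η.snd = jgR L (Real.log r) * y := by simp [hη]
  have hηg : JgGood v η := by
    refine ⟨fun h => absurd (hη1 ▸ h) hy0, fun _ => ?_⟩
    rw [hη1, hη2, ← hr, sub_self, map_zero]; exact hr0
  set e := (ξ - (a : DualNumber L)).snd - jgR L (Real.log r) * y with he
  have hξη : ξ - (a : DualNumber L) = η + TrivSqZeroExt.inr e := by
    ext
    · simp [hη, hy, hπ, jgPi_apply]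
    · simp [hη, he]
  set T := taylor a p with hT
  set q := ((derivative p).map π).eval ξ.fst with hq
  set M := v q * r with hM
  have hM0 : 0 < M := mul_pos (v.pos hne) hr0
  have hT0 : aeval (ξ - (a : DualNumber L)) T = 0 := by
    rw [hT, taylor_apply, aeval_comp]
    have : aeval (ξ - (a : DualNumber L)) (X + C a) = ξ := by
      rw [map_add, aeval_X, aeval_C]
      exact sub_add_cancel _ _
    rw [this, hp]
  have hder : derivative T = taylor a (derivative p) := by
    rw [hT, taylor_apply, taylor_apply, derivative_comp]; simp
  have hTmap : T.map π = taylor (π a) (p.map π) := by rw [hT, map_taylor]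
  have hdereval : (aeval η (derivative T)).fst = q := by
    rw [jg_fst_aeval, hη1, hder, map_taylor, taylor_eval, hq, hy]
    congr 1; ring
  have hfac : (derivative p).map π = C (π lc) * ((m.map π).map fun s => X - C s).prod := by
    rw [hd, Polynomial.map_mul, map_C, Polynomial.map_multiset_prod, Multiset.map_map,
      Multiset.map_map]
    congr 3
    ext s; simp
  have hqv : q = π lc * ((m.map π).map fun s => ξ.fst - s).prod := by
    rw [hq, hfac, eval_mul, eval_C, eval_multiset_prod, Multiset.map_map]
    congr 3
    ext s; simp
  have hfacT : (derivative T).map π =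
      C (π lc) * ((m.map π).map fun s => (X - C (s - π a) : L[X])).prod := by
    rw [hder, map_taylor, hfac, taylor_mul, taylor_C]
    congr 1
    rw [taylor_apply, multiset_prod_comp, Multiset.map_map]
    congr 2
    ext1 s
    simp only [Function.comp_apply, sub_comp, X_comp, C_comp, C_sub]
    ring
  have hcoef : ∀ j, v (π (T.coeff (j + 1))) * r ^ j ≤ v q := by
    intro j
    have h1 : ((derivative T).map π).coeff j = π (T.coeff (j + 1)) * ((j + 1 : ℕ) : L) := by
      rw [coeff_map, coeff_derivative, map_mul]
      push_cast
      simp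
    have h2 : v (π (T.coeff (j + 1))) = v (((derivative T).map π).coeff j) := by
      rw [h1, v.map_mul, jg_natCast hv, mul_one]
    rw [h2, hfacT, coeff_C_mul, hqv, v.map_mul, v.map_mul, mul_assoc]
    refine mul_le_mul_of_nonneg_left ?_ (v.nonneg _)
    refine jg_gauss hv r hr0.le ξ.fst (π a) (m.map π) ?_ le_rfl j
    intro s hs
    obtain ⟨s', hs', rfl⟩ := Multiset.mem_map.mp hs
    exact hm s' hs'
  have hcoefS : ∀ j, v (π (T.coeff (j + 1)) * y ^ (j + 1)) ≤ M := by
    intro j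
    rw [v.map_mul, v.map_pow, pow_succ, ← mul_assoc]
    exact mul_le_mul_of_nonneg_right (hcoef j) hr0.le
  have hTy : (T.map π).eval y = 0 := by
    have := jg_fst_aeval S (ξ - (a : DualNumber L)) T
    rw [hT0] at this
    exact this.symm
  have hcoef0 : v (π (T.coeff 0) * y ^ 0) ≤ M := by
    have h1 : (T.map π).eval y = π (T.coeff 0) * y ^ 0 +
        ∑ j ∈ Finset.range T.natDegree, π (T.coeff (j + 1)) * y ^ (j + 1) := by
      rw [eval_map, eval₂_eq_sum_range, Finset.sum_range_succ', add_comm]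
    rw [hTy] at h1
    rw [eq_neg_of_add_eq_zero_left h1.symm, v.map_neg]
    exact hv.sum_le _ _ _ hM0.le fun j _ => hcoefS j
  have hall : ∀ j, v (π (T.coeff j) * y ^ j) ≤ M := by
    intro j; cases j with
    | zero => exact hcoef0
    | succ j => exact hcoefS j
  have hlev : JgLev v M (aeval η T) := by
    rw [aeval_def, eval₂_eq_sum_range]
    refine JgLev.sum hv hM0 _ _ fun j _ => ?_
    have hg : JgGood v (algebraMap S (DualNumber L) (T.coeff j) * η ^ j) := by
      exact (hS _ (T.coeff j).2).mul hv (hηg.pow hv j)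
    refine hg.lev hv hM0 ?_
    have : (algebraMap S (DualNumber L) (T.coeff j) * η ^ j).fst = π (T.coeff j) * y ^ j := by
      rw [dn_fst_mul, TrivSqZeroExt.fst_pow, hη1]
      rfl
    rw [this]; exact hall j
  have hsum : aeval η T + aeval η (derivative T) * TrivSqZeroExt.inr e = 0 := by
    rw [← aeval_add_of_sq_eq_zero T η (TrivSqZeroExt.inr e) (by
      rw [sq]; exact TrivSqZeroExt.inr_mul_inr _ _ _), ← hξη, hT0]
  have hsnd : (aeval η T).snd + q * e = 0 := by
    have h := congrArg TrivSqZeroExt.snd hsum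
    rw [TrivSqZeroExt.snd_add, dn_snd_mul, hdereval] at h
    simpa using h
  have hfst : (aeval η T).fst = 0 := by
    rw [jg_fst_aeval, hη1]; exact hTy
  have hlast := hlev.2
  rw [hfst, mul_zero, sub_zero, eq_neg_of_add_eq_zero_left hsnd, v.map_neg, v.map_mul, hM] at hlast
  have hfin : v e < r := lt_of_mul_lt_mul_left hlast (v.nonneg _)
  have hf : (ξ - (a : DualNumber L)).fst = y := by simp [hy, hπ, jgPi_apply]
  refine ⟨fun h => absurd (hf ▸ h) hy0, fun _ => ?_⟩
  rw [hf]
  exact hfin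

end Ext

section Max

variable {L : Type*} [Field L] [Algebra ℂ L] {v : AbsoluteValue L ℝ}

lemma jg_inj (S : Subalgebra ℂ (DualNumber L)) (hS : ∀ s ∈ S, JgGood v s)
    (a b : S) (h : jgPi S a = jgPi S b) : a = b := by
  have h1 := (hS _ (a - b).2).1 (by
    have : jgPi S (a - b) = 0 := by rw [map_sub, h, sub_self]
    exact this)
  have h2 : (a : DualNumber L) - b = 0 := by
    ext
    · rw [TrivSqZeroExt.fst_sub]; exact sub_eq_zero.mpr h
    · exact h1
  exact Subtype.ext (sub_eq_zero.mp h2)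

/-- the fraction ring of `S` in the dual numbers -/
def jgFrac (S : Subalgebra ℂ (DualNumber L)) : Subalgebra ℂ (DualNumber L) where
  carrier := {u | ∃ t ∈ S, t.fst ≠ 0 ∧ u * t ∈ S}
  mul_mem' := by
    rintro a b ⟨s, hs, hs0, hsa⟩ ⟨t, ht, ht0, htb⟩
    refine ⟨s * t, S.mul_mem hs ht, ?_, ?_⟩
    · rw [dn_fst_mul]; exact mul_ne_zero hs0 ht0
    · have := S.mul_mem hsa htb
      rwa [show a * s * (b * t) = a * b * (s * t) by ring] at this
  add_mem' := by
    rintro a b ⟨s, hs, hs0, hsa⟩ ⟨t, ht, ht0, htb⟩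
    refine ⟨s * t, S.mul_mem hs ht, ?_, ?_⟩
    · rw [dn_fst_mul]; exact mul_ne_zero hs0 ht0
    · have := S.add_mem (S.mul_mem hsa ht) (S.mul_mem htb hs)
      rwa [show a * s * t + b * t * s = (a + b) * (s * t) by ring] at this
  algebraMap_mem' := by
    intro c
    exact ⟨1, S.one_mem, by simp, by rw [mul_one]; exact S.algebraMap_mem c⟩

lemma jg_le_frac (S : Subalgebra ℂ (DualNumber L)) : S ≤ jgFrac S := by
  intro a ha
  exact ⟨1, S.one_mem, by simp, by rwa [mul_one]⟩

lemma jg_inv (hv : JgNA v) (S : Subalgebra ℂ (DualNumber L)) (hS : ∀ s ∈ S, JgGood v s)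
    (hmax : ∀ T : Subalgebra ℂ (DualNumber L), S ≤ T → (∀ t ∈ T, JgGood v t) → T ≤ S)
    (a : S) (ha : jgPi S a ≠ 0) : ∃ b : S, b * a = 1 := by
  have h := hmax (jgFrac S) (jg_le_frac S) (by
    rintro u ⟨t, ht, ht0, hut⟩
    exact (hS _ hut).cancel hv (hS _ ht) ht0)
  have ha' : (a : DualNumber L).fst ≠ 0 := ha
  set w : DualNumber L := TrivSqZeroExt.inl ((a : DualNumber L).fst)⁻¹ +
    TrivSqZeroExt.inr (-(a : DualNumber L).snd * ((a : DualNumber L).fst)⁻¹ ^ 2) with hw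
  have hwa : w * a = 1 := by
    ext
    · simp [hw, ha']
    · rw [dn_snd_mul]; simp [hw]; field_simp; ring
  have hwS : w ∈ S := h ⟨a, a.2, ha', by rw [hwa]; exact S.one_mem⟩
  exact ⟨⟨w, hwS⟩, Subtype.ext hwa⟩

open Polynomial in
lemma jg_mem_of_good (S : Subalgebra ℂ (DualNumber L))
    (hmax : ∀ T : Subalgebra ℂ (DualNumber L), S ≤ T → (∀ t ∈ T, JgGood v t) → T ≤ S)
    (ξ : DualNumber L) (h : ∀ p : S[X], JgGood v (aeval ξ p)) : ξ ∈ S := by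
  have := hmax ((aeval ξ : S[X] →ₐ[S] DualNumber L).restrictScalars ℂ).range ?_ ?_
  · exact this ⟨X, by simp⟩
  · intro a ha
    exact ⟨C ⟨a, ha⟩, by simp⟩
  · rintro _ ⟨p, rfl⟩
    exact h p

open Polynomial in
lemma jg_factor [IsAlgClosed L] (hv : JgNA v) (S : Subalgebra ℂ (DualNumber L))
    (hS : ∀ s ∈ S, JgGood v s)
    (hmax : ∀ T : Subalgebra ℂ (DualNumber L), S ≤ T → (∀ t ∈ T, JgGood v t) → T ≤ S)
    (d : ℕ) (hmin : ∀ q : S[X], q.Monic → 0 < q.natDegree → q.natDegree < d → ∀ y : L,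
      (q.map (jgPi S)).eval y = 0 → ∃ a : S, jgPi S a = y)
    (p : S[X]) (hp : p ≠ 0) (hd : p.natDegree < d) :
    ∃ (lc : S) (m : Multiset S), jgPi S lc ≠ 0 ∧ p = C lc * (m.map fun s => X - C s).prod := by
  have hlc : jgPi S p.leadingCoeff ≠ 0 := by
    intro h
    have := jg_inj S hS p.leadingCoeff 0 (by rw [h, map_zero])
    exact hp (leadingCoeff_eq_zero.mp this)
  obtain ⟨b, hb⟩ := jg_inv hv S hS hmax _ hlc
  have hroot : ∀ q : S[X], q.Monic → 0 < q.natDegree → q.natDegree < d → ∃ a, q.IsRoot a := by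
    intro q hq h0 h1
    obtain ⟨y, hy⟩ := IsAlgClosed.exists_root (q.map (jgPi S)) (by
      rw [hq.degree_map]
      exact (natDegree_pos_iff_degree_pos.mp h0).ne')
    obtain ⟨a, ha⟩ := hmin q hq h0 h1 y hy
    refine ⟨a, jg_inj S hS _ _ ?_⟩
    rw [map_zero]
    rw [← ha, IsRoot, eval_map_apply] at hy
    exact hy
  have hmon : (C b * p).Monic := by
    refine monic_C_mul_of_mul_leadingCoeff_eq_one hb
  have hdeg : (C b * p).natDegree = p.natDegree := by
    refine natDegree_C_mul_of_mul_ne_zero ?_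
    rw [hb]; exact one_ne_zero
  obtain ⟨m, hm⟩ := jg_split d hroot _ (C b * p) hmon hdeg hd
  refine ⟨p.leadingCoeff, m, hlc, ?_⟩
  rw [← hm, ← mul_assoc, ← C_mul, mul_comm p.leadingCoeff b, hb, C_1, one_mul]

open Polynomial in
lemma jg_good_of_factor {S : Type*} [CommRing S] [Algebra S (DualNumber L)] (hv : JgNA v)
    (hS : ∀ s : S, JgGood v (algebraMap S (DualNumber L) s)) (ξ : DualNumber L)
    (hξ : ∀ a : S, JgGood v (ξ - algebraMap S (DualNumber L) a))
    (lc : S) (m : Multiset S) : JgGood v (aeval ξ (C lc * (m.map fun s => X - C s).prod)) := by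
  rw [map_mul, aeval_C, map_multiset_prod, Multiset.map_map]
  refine (hS lc).mul hv (JgGood.multiset_prod hv _ ?_)
  intro s hs
  obtain ⟨a, _, rfl⟩ := Multiset.mem_map.mp hs
  simp only [Function.comp_apply, map_sub, aeval_X, aeval_C]
  exact hξ a

/-- Spherical completeness (for countable chains). -/
def JgSph (v : AbsoluteValue L ℝ) : Prop :=
  ∀ (c : ℕ → L) (r : ℕ → ℝ), (∀ i j, i ≤ j → v (c j - c i) < r i) → ∃ z, ∀ i, v (z - c i) ≤ r i

lemma jg_transc (hv : JgNA v) (hsph : JgSph v) (S : Subalgebra ℂ (DualNumber L))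
    (hS : ∀ s ∈ S, JgGood v s) (x : L) (hx : ∀ a : S, x ≠ jgPi S a) :
    ∃ ξ : DualNumber L, ξ.fst = x ∧ ∀ a : S, JgGood v (ξ - (a : DualNumber L)) := by
  set c : S → L := fun a => (a : DualNumber L).snd +
    jgR L (Real.log (v (x - jgPi S a))) * (x - jgPi S a) with hc
  set X : L → DualNumber L := fun z => TrivSqZeroExt.inl x + TrivSqZeroExt.inr z with hX
  have hX1 : ∀ z, (X z).fst = x := fun z => by simp [hX]
  have hX2 : ∀ z, (X z).snd = z := fun z => by simp [hX]
  have hpos : ∀ a : S, 0 < v (x - jgPi S a) := fun a => v.pos (sub_ne_zero.mpr (hx a))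
  have good_iff : ∀ (z : L) (a : S), JgGood v (X z - (a : DualNumber L)) ↔
      v (z - c a) < v (x - jgPi S a) := by
    intro z a
    have e1 : (X z - (a : DualNumber L)).fst = x - jgPi S a := by
      rw [TrivSqZeroExt.fst_sub, hX1]; rfl
    have e2 : (X z - (a : DualNumber L)).snd -
        jgR L (Real.log (v (x - jgPi S a))) * (x - jgPi S a) = z - c a := by
      rw [TrivSqZeroExt.snd_sub, hX2, hc]; ring
    have hne : x - jgPi S a ≠ 0 := sub_ne_zero.mpr (hx a)
    rw [JgGood, e1, e2]
    exact ⟨fun h => h.2 hne, fun h => ⟨fun h0 => absurd h0 hne, fun _ => h⟩⟩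
  have nest : ∀ (z : L) (a b : S), v (x - jgPi S b) ≤ v (x - jgPi S a) →
      v (z - c b) < v (x - jgPi S b) → v (z - c a) < v (x - jgPi S a) := by
    intro z a b hab h
    rw [← good_iff] at h ⊢
    refine h.nest hv ?_ ?_ ?_
    · exact hS _ (b - a).2
    · rw [hX1]; exact hx a
    · rw [hX1]; exact hab
  suffices h : ∃ z, ∀ a, v (z - c a) < v (x - jgPi S a) by
    obtain ⟨z, hz⟩ := h
    exact ⟨X z, hX1 z, fun a => (good_iff z a).mpr (hz a)⟩
  by_cases hatt : ∃ b : S, ∀ a : S, v (x - jgPi S b) ≤ v (x - jgPi S a)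
  · obtain ⟨b, hb⟩ := hatt
    refine ⟨c b, fun a => nest _ a b (hb a) ?_⟩
    rw [sub_self, map_zero]; exact hpos b
  · push Not at hatt
    set R : Set ℝ := Set.range fun a : S => v (x - jgPi S a) with hR
    have hbdd : BddBelow R := ⟨0, by rintro _ ⟨a, rfl⟩; exact v.nonneg _⟩
    obtain ⟨u, hu, hlim, hmem⟩ := exists_seq_tendsto_sInf (S := R) ⟨_, ⟨0, rfl⟩⟩ hbdd
    choose b hb using hmem
    simp only at hb
    obtain ⟨z, hz⟩ := hsph (fun i => c (b i)) u (by
      intro i j hij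
      rw [← hb i]
      refine nest _ (b i) (b j) ?_ ?_
      · rw [hb i, hb j]; exact hu hij
      · rw [sub_self, map_zero]; exact hpos _)
    refine ⟨z, fun a => ?_⟩
    obtain ⟨a', ha'⟩ := hatt a
    have hlt : sInf R < v (x - jgPi S a) := (csInf_le hbdd ⟨a', rfl⟩).trans_lt ha'
    obtain ⟨i, hi⟩ := (hlim.eventually_lt_const hlt).exists
    have e : z - c a = (z - c (b i)) + (c (b i) - c a) := by ring
    rw [e]
    refine (hv.na _ _).trans_lt (max_lt ((hz i).trans_lt hi) ?_)
    refine nest _ a (b i) ?_ ?_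
    · rw [hb i]; exact hi.le
    · rw [sub_self, map_zero]; exact hpos _

open Polynomial in
lemma jg_algebraic [IsAlgClosed L] (hv : JgNA v) (S : Subalgebra ℂ (DualNumber L))
    (hS : ∀ s ∈ S, JgGood v s)
    (hmax : ∀ T : Subalgebra ℂ (DualNumber L), S ≤ T → (∀ t ∈ T, JgGood v t) → T ≤ S)
    (p : S[X]) (hp : p.Monic) (hp0 : 0 < p.natDegree) (x : L) (hx : ∀ a : S, x ≠ jgPi S a)
    (hpx : (p.map (jgPi S)).eval x = 0)
    (hmin : ∀ q : S[X], q.Monic → 0 < q.natDegree → q.natDegree < p.natDegree → ∀ y : L,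
      (q.map (jgPi S)).eval y = 0 → ∃ a : S, jgPi S a = y) : False := by
  classical
  have hder0 : derivative p ≠ 0 := by
    intro h
    have h1 := congrArg (fun q : S[X] => jgPi S (q.coeff (p.natDegree - 1))) h
    simp only [coeff_derivative, coeff_zero, map_zero] at h1
    rw [Nat.sub_add_cancel hp0] at h1
    have h2 : p.coeff p.natDegree = 1 := hp
    rw [h2, one_mul] at h1
    have h3 := jg_natCast hv (p.natDegree - 1)
    rw [map_add, map_natCast, map_one] at h1
    push_cast at h3
    rw [h1] at h3
    simp at h3
  obtain ⟨lc, m, hlc, hfac⟩ := jg_factor hv S hS hmax _ hmin (derivative p) hder0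
    (natDegree_derivative_lt hp0.ne')
  have hqne : ((derivative p).map (jgPi S)).eval x ≠ 0 := by
    rw [hfac, Polynomial.map_mul, map_C, eval_mul, eval_C, Polynomial.map_multiset_prod,
      eval_multiset_prod, Multiset.map_map, Multiset.map_map]
    refine mul_ne_zero hlc (Multiset.prod_ne_zero ?_)
    intro h
    obtain ⟨s, _, hs⟩ := Multiset.mem_map.mp h
    simp at hs
    exact hx s (sub_eq_zero.mp hs)
  set q := ((derivative p).map (jgPi S)).eval x with hq
  set w := (aeval (TrivSqZeroExt.inl x : DualNumber L) p).snd with hw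
  set ξ : DualNumber L := TrivSqZeroExt.inl x + TrivSqZeroExt.inr (-w / q) with hξ
  have hξ1 : ξ.fst = x := by simp [hξ]
  have hξp : aeval ξ p = 0 := by
    rw [hξ, aeval_add_of_sq_eq_zero p _ _ (by
      rw [sq]; exact TrivSqZeroExt.inr_mul_inr _ _ _)]
    ext
    · rw [TrivSqZeroExt.fst_add, dn_fst_mul, jg_fst_aeval]
      simpa using hpx
    · rw [TrivSqZeroExt.snd_add, dn_snd_mul, jg_fst_aeval]
      simp only [TrivSqZeroExt.fst_inl, TrivSqZeroExt.snd_inr, TrivSqZeroExt.fst_inr, mul_zero,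
        add_zero, TrivSqZeroExt.snd_zero]
      rw [← hw, ← hq]
      field_simp
      ring
  have hgood : ∀ b : S, JgGood v (ξ - (b : DualNumber L)) := by
    intro b
    obtain ⟨a, -, ha⟩ := (b ::ₘ m).toFinset.exists_min_image (fun s => v (x - jgPi S s))
      ⟨b, by simp⟩
    have hga : JgGood v (ξ - (a : DualNumber L)) := by
      refine jg_alg_ball hv S hS ξ p hξp a lc m hfac ?_ ?_ ?_
      · intro s hs
        rw [hξ1]; exact ha s (by simp [hs])
      · rw [hξ1]; exact hx a
      · rw [hξ1]; exact hqne
    refine hga.nest hv (hS _ (a - b).2) ?_ ?_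
    · rw [hξ1]; exact hx b
    · rw [hξ1]; exact ha b (by simp)
  have hmem : ξ ∈ S := by
    refine jg_mem_of_good S hmax ξ fun t => ?_
    rw [← modByMonic_add_div t p, map_add, map_mul, hξp, zero_mul, add_zero]
    by_cases h0 : t %ₘ p = 0
    · rw [h0, map_zero]; exact hS _ S.zero_mem
    · obtain ⟨lc', m', -, hf⟩ := jg_factor hv S hS hmax _ hmin (t %ₘ p) h0
        (natDegree_modByMonic_lt t hp (by rintro rfl; simp at hp0))
      rw [hf]
      exact jg_good_of_factor hv (fun s => hS _ s.2) ξ hgood lc' m'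
  exact hx ⟨ξ, hmem⟩ hξ1.symm

open Polynomial in
theorem jg_exists_S [IsAlgClosed L] (hv : JgNA v) (hsph : JgSph v) :
    ∃ S : Subalgebra ℂ (DualNumber L), (∀ s ∈ S, JgGood v s) ∧ ∀ x : L, ∃ a : S, jgPi S a = x := by
  obtain ⟨S, -, hSmax⟩ := zorn_le_nonempty₀
    {S : Subalgebra ℂ (DualNumber L) | ∀ s ∈ S, JgGood v s} (by
      intro c hc hchain y hy
      have hdir : DirectedOn (· ≤ ·) c := hchain.directedOn
      have : Nonempty c := ⟨⟨y, hy⟩⟩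
      refine ⟨⨆ i : c, (i : Subalgebra ℂ (DualNumber L)), ?_, ?_⟩
      · intro s hs
        have h1 : s ∈ ((⨆ i : c, (i : Subalgebra ℂ (DualNumber L)) :
          Subalgebra ℂ (DualNumber L)) : Set (DualNumber L)) := hs
        rw [Subalgebra.coe_iSup_of_directed hdir.directed_val, Set.mem_iUnion] at h1
        obtain ⟨i, hi⟩ := h1
        exact hc i.2 s hi
      · intro z hz
        exact le_iSup (fun i : c => (i : Subalgebra ℂ (DualNumber L))) ⟨z, hz⟩)
    ⊥ (by
      intro s hs
      obtain ⟨c, rfl⟩ := Algebra.mem_bot.mp hs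
      exact JgGood.const hv c)
  have hS : ∀ s ∈ S, JgGood v s := hSmax.1
  have hmax : ∀ T : Subalgebra ℂ (DualNumber L), S ≤ T → (∀ t ∈ T, JgGood v t) → T ≤ S :=
    fun T hT hTg => hSmax.2 hTg hT
  refine ⟨S, hS, ?_⟩
  by_cases hA : ∃ d : ℕ, ∃ p : S[X], p.natDegree = d ∧ p.Monic ∧ 0 < p.natDegree ∧
      ∃ x : L, (∀ a : S, x ≠ jgPi S a) ∧ (p.map (jgPi S)).eval x = 0
  · exfalso
    classical
    obtain ⟨p, hpd, hp, hp0, x, hx, hpx⟩ := Nat.find_spec hA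
    refine jg_algebraic hv S hS hmax p hp hp0 x hx hpx ?_
    intro q hq hq0 hqd y hy
    by_contra hcon
    push Not at hcon
    exact Nat.find_min hA (hpd ▸ hqd) ⟨q, rfl, hq, hq0, y, fun a => (hcon a).symm, hy⟩
  · push Not at hA
    by_contra hcon
    push Not at hcon
    obtain ⟨x, hx⟩ := hcon
    obtain ⟨ξ, hξ1, hξ⟩ := jg_transc hv hsph S hS x (fun a => (hx a).symm)
    have hmem : ξ ∈ S := by
      refine jg_mem_of_good S hmax ξ fun t => ?_
      by_cases h0 : t = 0
      · rw [h0, map_zero]; exact hS _ S.zero_mem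
      · obtain ⟨lc', m', -, hf⟩ := jg_factor hv S hS hmax (t.natDegree + 1) (by
          intro q hq hq0 _ y hy
          by_contra hcon
          push Not at hcon
          exact hA _ q rfl hq hq0 y (fun a => (hcon a).symm) hy) t h0 (Nat.lt_succ_self _)
        rw [hf]
        exact jg_good_of_factor hv (fun s => hS _ s.2) ξ hξ lc' m'
    exact hx ⟨ξ, hmem⟩ hξ1

/-- A derivation compatible with the absolute value. -/
theorem jg_exists_D [IsAlgClosed L] (hv : JgNA v) (hsph : JgSph v) :
    ∃ D : L → L, (∀ a b, D (a + b) = D a + D b) ∧ (∀ a b, D (a * b) = a * D b + D a * b) ∧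
      (∀ c : ℂ, D (algebraMap ℂ L c) = 0) ∧
      (∀ a, a ≠ 0 → v (D a - jgR L (Real.log (v a)) * a) < v a) := by
  obtain ⟨S, hS, hsurj⟩ := jg_exists_S hv hsph
  choose σ hσ using hsurj
  have hu : ∀ a : S, σ (jgPi S a) = a := fun a => jg_inj S hS _ _ (hσ _)
  refine ⟨fun x => (σ x : DualNumber L).snd, ?_, ?_, ?_, ?_⟩
  · intro a b
    have : σ (a + b) = σ a + σ b := by
      rw [← hu (σ a + σ b), map_add, hσ, hσ]
    simp only [this]
    exact TrivSqZeroExt.snd_add _ _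
  · intro a b
    have : σ (a * b) = σ a * σ b := by
      rw [← hu (σ a * σ b), map_mul, hσ, hσ]
    simp only [this]
    have h := dn_snd_mul (σ a : DualNumber L) (σ b : DualNumber L)
    rw [← jgPi_apply, ← jgPi_apply, hσ, hσ] at h
    exact h
  · intro c
    have : σ (algebraMap ℂ L c) = algebraMap ℂ S c := by
      rw [← hu (algebraMap ℂ S c)]
      rfl
    simp only [this]
    rfl
  · intro a ha
    have h := (hS _ (σ a).2).2
    rw [← jgPi_apply, hσ] at h
    exact h ha

end Max

/-- scales used in the construction of the field of asymptotic numbers -/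
structure JgScale where
  s : ℕ → ℝ
  pos : ∀ m, 0 < s m
  le_one : ∀ m, s m ≤ 1
  lim : Tendsto s atTop (nhds 0)

section Asym

variable (σ : JgScale)

lemma jg_rpow_max (a b s : ℝ) (ha : 0 ≤ a) (hb : 0 ≤ b) (hs : 0 ≤ s) :
    (max a b) ^ s = max (a ^ s) (b ^ s) := by
  rcases le_total a b with h | h
  · rw [max_eq_right h, max_eq_right (Real.rpow_le_rpow ha h hs)]
  · rw [max_eq_left h, max_eq_left (Real.rpow_le_rpow hb h hs)]

lemma jg_add_rpow (a b : ℂ) (s : ℝ) (hs : 0 ≤ s) :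
    ‖a + b‖ ^ s ≤ 2 ^ s * max (‖a‖ ^ s) (‖b‖ ^ s) := by
  rw [← jg_rpow_max _ _ _ (norm_nonneg _) (norm_nonneg _) hs,
    ← Real.mul_rpow (by norm_num) (le_max_of_le_left (norm_nonneg _))]
  refine Real.rpow_le_rpow (norm_nonneg _) ?_ hs
  refine (norm_add_le a b).trans ?_
  rw [two_mul]
  exact add_le_add (le_max_left _ _) (le_max_right _ _)

/-- sequences of moderate growth -/
def jgRing : Subalgebra ℂ (ℕ → ℂ) where
  carrier := {y | ∃ C : ℝ, ∀ m, ‖y m‖ ^ σ.s m ≤ C}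
  mul_mem' := by
    rintro a b ⟨C, hC⟩ ⟨C', hC'⟩
    refine ⟨C * C', fun m => ?_⟩
    rw [Pi.mul_apply, norm_mul, Real.mul_rpow (norm_nonneg _) (norm_nonneg _)]
    exact mul_le_mul (hC m) (hC' m) (by positivity) ((by positivity : (0 : ℝ) ≤ _).trans (hC m))
  add_mem' := by
    rintro a b ⟨C, hC⟩ ⟨C', hC'⟩
    refine ⟨2 * max C C', fun m => ?_⟩
    refine (jg_add_rpow _ _ _ (σ.pos m).le).trans ?_
    refine mul_le_mul ?_ (max_le_max (hC m) (hC' m)) (by positivity) (by norm_num)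
    calc (2 : ℝ) ^ σ.s m ≤ 2 ^ (1 : ℝ) :=
          Real.rpow_le_rpow_of_exponent_le (by norm_num) (σ.le_one m)
      _ = 2 := Real.rpow_one 2
  algebraMap_mem' := by
    intro c
    refine ⟨max 1 ‖c‖, fun m => ?_⟩
    have e : (algebraMap ℂ (ℕ → ℂ) c) m = c := rfl
    rw [e]
    rcases le_total ‖c‖ 1 with h | h
    · exact (Real.rpow_le_one (norm_nonneg _) h (σ.pos m).le).trans (le_max_left _ _)
    · refine le_trans ?_ (le_max_right _ _)
      calc ‖c‖ ^ σ.s m ≤ ‖c‖ ^ (1 : ℝ) := Real.rpow_le_rpow_of_exponent_le h (σ.le_one m)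
        _ = ‖c‖ := Real.rpow_one _

variable {σ}

lemma jg_mem_of_le {y w : ℕ → ℂ} (hw : w ∈ jgRing σ) (h : ∀ m, ‖y m‖ ≤ ‖w m‖) :
    y ∈ jgRing σ := by
  obtain ⟨C, hC⟩ := hw
  exact ⟨C, fun m => (Real.rpow_le_rpow (norm_nonneg _) (h m) (σ.pos m).le).trans (hC m)⟩

lemma jgN_exists (y : jgRing σ) :
    ∃ l : ℝ, Tendsto (fun m => ‖(y : ℕ → ℂ) m‖ ^ σ.s m) (hyperfilter ℕ : Filter ℕ) (nhds l) := by
  obtain ⟨C, hC⟩ := y.2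
  have hK : IsCompact (Set.Icc (0 : ℝ) C) := isCompact_Icc
  obtain ⟨l, -, hl⟩ := hK.ultrafilter_le_nhds
    ((hyperfilter ℕ).map (fun m => ‖(y : ℕ → ℂ) m‖ ^ σ.s m)) (by
      rw [le_principal_iff, Ultrafilter.mem_coe, Ultrafilter.mem_map]
      exact Filter.univ_mem' fun m => ⟨by positivity, hC m⟩)
  exact ⟨l, hl⟩

/-- the multiplicative seminorm -/
noncomputable def jgN (y : jgRing σ) : ℝ := (jgN_exists y).choose

lemma jgN_tendsto (y : jgRing σ) :
    Tendsto (fun m => ‖(y : ℕ → ℂ) m‖ ^ σ.s m) (hyperfilter ℕ : Filter ℕ) (nhds (jgN y)) :=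
  (jgN_exists y).choose_spec

lemma jgN_eq {y : jgRing σ} {l : ℝ}
    (h : Tendsto (fun m => ‖(y : ℕ → ℂ) m‖ ^ σ.s m) (hyperfilter ℕ : Filter ℕ) (nhds l)) :
    jgN y = l := tendsto_nhds_unique (jgN_tendsto y) h

lemma jg_hyper_le : (hyperfilter ℕ : Filter ℕ) ≤ atTop := Nat.hyperfilter_le_atTop

lemma jgN_const (c : ℂ) (hc : c ≠ 0) : jgN (algebraMap ℂ (jgRing σ) c) = 1 := by
  refine jgN_eq ?_
  have h := (tendsto_const_nhds (x := ‖c‖) (f := atTop)).rpow σ.lim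
    (Or.inl (norm_ne_zero_iff.mpr hc))
  rw [Real.rpow_zero] at h
  exact h.mono_left jg_hyper_le

lemma jgN_eventually_zero {y : jgRing σ}
    (h : ∀ᶠ m in (hyperfilter ℕ : Filter ℕ), (y : ℕ → ℂ) m = 0) : jgN y = 0 := by
  refine jgN_eq ?_
  refine tendsto_const_nhds.congr' ?_
  filter_upwards [h] with m hm
  rw [hm, norm_zero, Real.zero_rpow (σ.pos m).ne']

lemma jgN_zero : jgN (0 : jgRing σ) = 0 :=
  jgN_eventually_zero (Eventually.of_forall fun _ => rfl)

lemma jgN_nonneg (y : jgRing σ) : 0 ≤ jgN y :=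
  ge_of_tendsto' (jgN_tendsto y) fun m => by positivity

lemma jgN_mul (y z : jgRing σ) : jgN (y * z) = jgN y * jgN z := by
  refine jgN_eq (((jgN_tendsto y).mul (jgN_tendsto z)).congr fun m => ?_)
  rw [← Real.mul_rpow (norm_nonneg _) (norm_nonneg _), ← norm_mul]
  rfl

lemma jgN_neg (y : jgRing σ) : jgN (-y) = jgN y := by
  refine jgN_eq ((jgN_tendsto y).congr fun m => ?_)
  rw [← norm_neg]
  rfl

lemma jgN_add (y z : jgRing σ) : jgN (y + z) ≤ max (jgN y) (jgN z) := by
  have h2 : Tendsto (fun m => (2 : ℝ) ^ σ.s m) (hyperfilter ℕ : Filter ℕ) (nhds 1) := by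
    have h := (tendsto_const_nhds (x := (2 : ℝ)) (f := atTop)).rpow σ.lim (Or.inl (by norm_num))
    rw [Real.rpow_zero] at h
    exact h.mono_left jg_hyper_le
  have h3 := h2.mul ((jgN_tendsto y).max (jgN_tendsto z))
  rw [one_mul] at h3
  exact le_of_tendsto_of_tendsto' (jgN_tendsto (y + z)) h3
    fun m => jg_add_rpow _ _ _ (σ.pos m).le

variable (σ) in
/-- the ideal of negligible sequences -/
noncomputable def jgI : Ideal (jgRing σ) where
  carrier := {y | jgN y = 0}
  zero_mem' := jgN_zero
  add_mem' := by
    intro a b (ha : jgN a = 0) (hb : jgN b = 0)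
    have := jgN_add a b
    rw [ha, hb, max_self] at this
    exact le_antisymm this (jgN_nonneg _)
  smul_mem' := by
    intro c a (ha : jgN a = 0)
    change jgN (c * a) = 0
    rw [jgN_mul, ha, mul_zero]

lemma jg_mem_I (y : jgRing σ) : y ∈ jgI σ ↔ jgN y = 0 := Iff.rfl

instance jgI_max : (jgI σ).IsMaximal := by
  rw [Ideal.isMaximal_iff]
  refine ⟨?_, ?_⟩
  · rw [jg_mem_I, ← map_one (algebraMap ℂ (jgRing σ)), jgN_const 1 one_ne_zero]
    exact one_ne_zero
  · intro J x hIJ hx hxJ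
    rw [jg_mem_I] at hx
    have hpos : 0 < jgN x := lt_of_le_of_ne (jgN_nonneg x) (Ne.symm hx)
    classical
    set c := jgN x / 2 with hc
    have hc0 : 0 < c := by positivity
    set y : ℕ → ℂ := fun m =>
      if c ≤ ‖(x : ℕ → ℂ) m‖ ^ σ.s m then ((x : ℕ → ℂ) m)⁻¹ else 0 with hy
    have hyR : y ∈ jgRing σ := by
      refine ⟨c⁻¹, fun m => ?_⟩
      by_cases h : c ≤ ‖(x : ℕ → ℂ) m‖ ^ σ.s m
      · simp only [hy, h, if_true, norm_inv]
        rw [Real.inv_rpow (norm_nonneg _)]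
        exact inv_anti₀ hc0 h
      · simp only [hy, h, if_false, norm_zero]
        rw [Real.zero_rpow (σ.pos m).ne']
        positivity
    have hev : ∀ᶠ m in (hyperfilter ℕ : Filter ℕ), c ≤ ‖(x : ℕ → ℂ) m‖ ^ σ.s m :=
      (jgN_tendsto x).eventually_const_le (by rw [hc]; linarith)
    have h1 : x * ⟨y, hyR⟩ - 1 ∈ jgI σ := by
      rw [jg_mem_I]
      refine jgN_eventually_zero ?_
      filter_upwards [hev] with m hm
      have hx0 : (x : ℕ → ℂ) m ≠ 0 := by
        intro h0
        rw [h0, norm_zero, Real.zero_rpow (σ.pos m).ne'] at hm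
        linarith
      change (x : ℕ → ℂ) m * y m - 1 = 0
      simp only [hy, hm, if_true]
      rw [mul_inv_cancel₀ hx0, sub_self]
    have h2 := J.sub_mem (J.mul_mem_right ⟨y, hyR⟩ hxJ) (hIJ h1)
    rwa [sub_sub_cancel] at h2

variable (σ) in
/-- the field of asymptotic numbers -/
def jgL : Type := jgRing σ ⧸ jgI σ

noncomputable instance jgL_field : Field (jgL σ) := Ideal.Quotient.field (jgI σ)

/-- quotient map -/
noncomputable def jgMk : jgRing σ →+* jgL σ := Ideal.Quotient.mk (jgI σ)

noncomputable instance jgL_algebra : Algebra ℂ (jgL σ) :=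
  (jgMk.comp (algebraMap ℂ (jgRing σ))).toAlgebra

lemma jgL_algebraMap (c : ℂ) : algebraMap ℂ (jgL σ) c = jgMk (algebraMap ℂ (jgRing σ) c) := rfl

lemma jgMk_surj : Function.Surjective (jgMk : jgRing σ →+* jgL σ) := Ideal.Quotient.mk_surjective

lemma jgMk_eq_zero (y : jgRing σ) : jgMk y = 0 ↔ jgN y = 0 :=
  Ideal.Quotient.eq_zero_iff_mem

lemma jgN_le_of_mk_eq (y z : jgRing σ) (h : jgMk y = jgMk z) : jgN y ≤ jgN z := by
  have h1 : jgN (y - z) = 0 := by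
    rw [← jgMk_eq_zero, map_sub, h, sub_self]
  have h2 := jgN_add (y - z) z
  rwa [sub_add_cancel, h1, max_eq_right (jgN_nonneg z)] at h2

/-- absolute value -/
noncomputable def jgAbs (x : jgL σ) : ℝ := jgN (jgMk_surj x).choose

lemma jgAbs_mk (y : jgRing σ) : jgAbs (jgMk y) = jgN y :=
  le_antisymm (jgN_le_of_mk_eq _ _ (jgMk_surj (jgMk y)).choose_spec)
    (jgN_le_of_mk_eq _ _ (jgMk_surj (jgMk y)).choose_spec.symm)

lemma jgAbs_add (x y : jgL σ) : jgAbs (x + y) ≤ max (jgAbs x) (jgAbs y) := by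
  obtain ⟨x, rfl⟩ := jgMk_surj x
  obtain ⟨y, rfl⟩ := jgMk_surj y
  rw [← map_add, jgAbs_mk, jgAbs_mk, jgAbs_mk]
  exact jgN_add x y

lemma jgAbs_nonneg (x : jgL σ) : 0 ≤ jgAbs x := jgN_nonneg _

variable (σ) in
/-- the absolute value as a bundled object -/
noncomputable def jgV : AbsoluteValue (jgL σ) ℝ where
  toFun := jgAbs
  map_mul' x y := by
    obtain ⟨x, rfl⟩ := jgMk_surj x
    obtain ⟨y, rfl⟩ := jgMk_surj y
    rw [← map_mul, jgAbs_mk, jgAbs_mk, jgAbs_mk]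
    exact jgN_mul x y
  nonneg' := jgAbs_nonneg
  eq_zero' x := by
    obtain ⟨x, rfl⟩ := jgMk_surj x
    rw [jgAbs_mk, jgMk_eq_zero]
  add_le' x y := by
    refine (jgAbs_add x y).trans (max_le ?_ ?_)
    · linarith [jgAbs_nonneg y]
    · linarith [jgAbs_nonneg x]

lemma jgV_mk (y : jgRing σ) : jgV σ (jgMk y) = jgN y := jgAbs_mk y

lemma jgV_na : JgNA (jgV σ) where
  na := jgAbs_add
  triv c hc := by
    rw [jgL_algebraMap, jgV_mk, jgN_const c hc]

lemma jgV_sph : JgSph (jgV σ) := by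
  classical
  intro c r h
  choose y hy using fun k => jgMk_surj (c k)
  have hr0 : 0 < r 0 := (AbsoluteValue.nonneg _ _).trans_lt (h 0 0 le_rfl)
  set P : ℕ → ℕ → Prop := fun m k => ∀ j ≤ k, ∀ i ≤ j,
    ‖(y j : ℕ → ℂ) m - (y i : ℕ → ℂ) m‖ ^ σ.s m < r i with hP
  have hP0 : ∀ m, P m 0 := by
    intro m j hj i hi
    obtain rfl : j = 0 := by omega
    obtain rfl : i = 0 := by omega
    rw [sub_self, norm_zero, Real.zero_rpow (σ.pos m).ne']
    exact hr0
  set K : ℕ → ℕ := fun m => Nat.findGreatest (P m) m with hK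
  have hPK : ∀ m, P m (K m) := fun m => Nat.findGreatest_spec (Nat.zero_le m) (hP0 m)
  set z : ℕ → ℂ := fun m => (y (K m) : ℕ → ℂ) m with hz
  have hz0 : (fun m => z m - (y 0 : ℕ → ℂ) m) ∈ jgRing σ :=
    ⟨r 0, fun m => (hPK m (K m) le_rfl 0 (Nat.zero_le _)).le⟩
  have hzR : z ∈ jgRing σ := by
    have := (jgRing σ).add_mem hz0 (y 0).2
    convert this using 1
    ext m
    simp
  refine ⟨jgMk ⟨z, hzR⟩, fun i => ?_⟩
  rw [← hy i, ← map_sub, jgV_mk]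
  have hev : ∀ j, ∀ᶠ m in (hyperfilter ℕ : Filter ℕ), ∀ i ≤ j,
      ‖(y j : ℕ → ℂ) m - (y i : ℕ → ℂ) m‖ ^ σ.s m < r i := by
    intro j
    have : ∀ i ∈ Finset.range (j + 1), ∀ᶠ m in (hyperfilter ℕ : Filter ℕ),
        ‖(y j : ℕ → ℂ) m - (y i : ℕ → ℂ) m‖ ^ σ.s m < r i := by
      intro i hi
      have hij : i ≤ j := by simpa [Nat.lt_succ_iff] using hi
      have h1 := h i j hij
      rw [← hy i, ← hy j, ← map_sub, jgV_mk] at h1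
      exact (jgN_tendsto (y j - y i)).eventually_lt_const h1
    filter_upwards [(Finset.eventually_all _).mpr this] with m hm i hi
    exact hm i (by simp; omega)
  have hevP : ∀ᶠ m in (hyperfilter ℕ : Filter ℕ), P m i := by
    have : ∀ j ∈ Finset.range (i + 1), ∀ᶠ m in (hyperfilter ℕ : Filter ℕ), ∀ i ≤ j,
      ‖(y j : ℕ → ℂ) m - (y i : ℕ → ℂ) m‖ ^ σ.s m < r i := fun j _ => hev j
    filter_upwards [(Finset.eventually_all _).mpr this] with m hm j hj
    exact hm j (by simp; omega)
  refine le_of_tendsto (jgN_tendsto _) ?_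
  filter_upwards [hevP, jg_hyper_le (eventually_ge_atTop i)] with m hm him
  exact (hPK m (K m) le_rfl i (Nat.le_findGreatest him hm)).le

/-- evaluation at an index -/
def jgEv (m : ℕ) : jgRing σ →+* ℂ := (Pi.evalRingHom (fun _ => ℂ) m).comp
  ((jgRing σ).val : jgRing σ →+* (ℕ → ℂ))

lemma jgEv_apply (m : ℕ) (y : jgRing σ) : jgEv m y = (y : ℕ → ℂ) m := rfl

open Polynomial in
lemma jg_root_bound (p : ℂ[X]) (hp : p.Monic) (z : ℂ) (hz : p.IsRoot z) :
    ‖z‖ ≤ 1 + ∑ i ∈ Finset.range p.natDegree, ‖p.coeff i‖ := by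
  have hS : 0 ≤ ∑ i ∈ Finset.range p.natDegree, ‖p.coeff i‖ :=
    Finset.sum_nonneg fun _ _ => norm_nonneg _
  by_contra hcon
  push Not at hcon
  have h1 : 1 ≤ ‖z‖ := by linarith
  set n := p.natDegree with hn
  have hn0 : n ≠ 0 := by
    intro h0
    rw [hp.natDegree_eq_zero.mp (hn ▸ h0)] at hz
    simp at hz
  have e : z ^ n = - ∑ i ∈ Finset.range n, p.coeff i * z ^ i := by
    have h := hz
    rw [IsRoot, eval_eq_sum_range, Finset.sum_range_succ, hp.coeff_natDegree, one_mul] at h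
    exact eq_neg_of_add_eq_zero_right h
  have h2 : ‖z‖ ^ n ≤ (∑ i ∈ Finset.range n, ‖p.coeff i‖) * ‖z‖ ^ (n - 1) := by
    rw [← norm_pow, e, norm_neg, Finset.sum_mul]
    refine (norm_sum_le _ _).trans (Finset.sum_le_sum fun i hi => ?_)
    rw [norm_mul, norm_pow]
    refine mul_le_mul_of_nonneg_left (pow_le_pow_right₀ h1 ?_) (norm_nonneg _)
    have := Finset.mem_range.mp hi
    omega
  have h3 : ‖z‖ ^ n = ‖z‖ * ‖z‖ ^ (n - 1) := by
    rw [← pow_succ', Nat.sub_add_cancel (Nat.one_le_iff_ne_zero.mpr hn0)]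
  rw [h3] at h2
  have h4 := le_of_mul_le_mul_right h2 (by positivity)
  linarith

open Polynomial in
instance jgL_closed : IsAlgClosed (jgL σ) := by
  refine IsAlgClosed.of_exists_root _ fun p hp hirr => ?_
  obtain ⟨P, hPp, hPdeg, hPm⟩ := lifts_and_natDegree_eq_and_monic
    (mem_lifts_of_surjective jgMk_surj p) hp
  have hdeg : P.natDegree ≠ 0 := by
    rw [hPdeg]
    exact hirr.natDegree_pos.ne'
  have hroot : ∀ m, ∃ z : ℂ, (P.map (jgEv m)).IsRoot z := by
    intro m
    refine IsAlgClosed.exists_root _ ?_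
    intro h0
    have h1 := natDegree_eq_of_degree_eq_some h0
    rw [hPm.natDegree_map] at h1
    exact hdeg h1
  choose z hz using hroot
  have hco : ∀ i, (fun m => ((‖(P.coeff i : ℕ → ℂ) m‖ : ℝ) : ℂ)) ∈ jgRing σ := by
    intro i
    refine jg_mem_of_le (P.coeff i).2 fun m => ?_
    simp
  have hw : ((1 : ℕ → ℂ) + ∑ i ∈ Finset.range P.natDegree,
      (fun m => ((‖(P.coeff i : ℕ → ℂ) m‖ : ℝ) : ℂ))) ∈ jgRing σ :=
    (jgRing σ).add_mem (jgRing σ).one_mem ((jgRing σ).sum_mem fun i _ => hco i)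
  have hzR : z ∈ jgRing σ := by
    refine jg_mem_of_le hw fun m => ?_
    have h1 := jg_root_bound _ (hPm.map (jgEv m)) (z m) (hz m)
    rw [hPm.natDegree_map] at h1
    refine h1.trans ?_
    simp only [coeff_map, jgEv_apply, Pi.add_apply, Pi.one_apply, Finset.sum_apply]
    rw [← Complex.ofReal_sum, ← Complex.ofReal_one, ← Complex.ofReal_add, Complex.norm_real]
    exact le_abs_self _
  refine ⟨jgMk ⟨z, hzR⟩, ?_⟩
  rw [← hPp, eval_map_apply]
  have : P.eval (⟨z, hzR⟩ : jgRing σ) = 0 := by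
    apply Subtype.ext
    funext m
    have h1 := hz m
    rw [IsRoot] at h1
    have h2 := eval_map_apply (p := P) (jgEv m) (⟨z, hzR⟩ : jgRing σ)
    rw [jgEv_apply, jgEv_apply] at h2
    exact h2.symm.trans h1
  rw [this, map_zero]

end Asym

section Cost

variable {R : Type*} [CommRing R] {n N : ℕ}

/-- conjugated matrix -/
def jgB (A : Matrix (Fin n) (Fin n) R) (Q : Matrix (Fin n) (Fin n) R) :
    Matrix (Fin n) (Fin n) R := Qᵀ * A * Q

/-- the cost -/
def jgF (A : Fin N → Matrix (Fin n) (Fin n) R) (Q : Matrix (Fin n) (Fin n) R) : R :=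
  ∑ l, ∑ k, (jgB (A l) Q k k) ^ 2

/-- the reduced gradient coefficients -/
def jgGam (A : Fin N → Matrix (Fin n) (Fin n) R) (Q : Matrix (Fin n) (Fin n) R)
    (i j : Fin n) : R :=
  ∑ l, (jgB (A l) Q i i - jgB (A l) Q j j) * jgB (A l) Q i j

lemma jgB_symm {A Q : Matrix (Fin n) (Fin n) R} (hA : Aᵀ = A) : (jgB A Q)ᵀ = jgB A Q := by
  unfold jgB
  rw [Matrix.transpose_mul, Matrix.transpose_mul, Matrix.transpose_transpose, hA, Matrix.mul_assoc]

lemma jgB_symm' {A Q : Matrix (Fin n) (Fin n) R} (hA : Aᵀ = A) (i j : Fin n) :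
    jgB A Q i j = jgB A Q j i := by
  conv_lhs => rw [← jgB_symm hA]
  rfl

lemma jgB_map {S : Type*} [CommRing S] (φ : R →+* S) (A Q : Matrix (Fin n) (Fin n) R)
    (i j : Fin n) : φ (jgB A Q i j) = jgB (A.map φ) (Q.map φ) i j := by
  unfold jgB
  rw [← Matrix.transpose_map, ← Matrix.map_mul, ← Matrix.map_mul]
  rfl

lemma jg_orth_map {S : Type*} [CommRing S] (φ : R →+* S) {Q : Matrix (Fin n) (Fin n) R}
    (hQ : Qᵀ * Q = 1) : (Q.map φ)ᵀ * Q.map φ = 1 := by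
  rw [← Matrix.transpose_map, ← Matrix.map_mul, hQ, Matrix.map_one _ (map_zero _) (map_one _)]

lemma jgF_map {S : Type*} [CommRing S] (φ : R →+* S) (A : Fin N → Matrix (Fin n) (Fin n) R)
    (Q : Matrix (Fin n) (Fin n) R) :
    φ (jgF A Q) = jgF (fun l => (A l).map φ) (Q.map φ) := by
  simp only [jgF, map_sum, map_pow, jgB_map]

lemma jgGam_map {S : Type*} [CommRing S] (φ : R →+* S) (A : Fin N → Matrix (Fin n) (Fin n) R)
    (Q : Matrix (Fin n) (Fin n) R) (i j : Fin n) :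
    φ (jgGam A Q i j) = jgGam (fun l => (A l).map φ) (Q.map φ) i j := by
  simp only [jgGam, map_sum, map_mul, map_sub, jgB_map]

lemma jgGam_anti {A : Fin N → Matrix (Fin n) (Fin n) R} (hA : ∀ l, (A l)ᵀ = A l)
    (Q : Matrix (Fin n) (Fin n) R) (i j : Fin n) : jgGam A Q j i = - jgGam A Q i j := by
  unfold jgGam
  rw [← Finset.sum_neg_distrib]
  refine Finset.sum_congr rfl fun l _ => ?_
  rw [jgB_symm' (hA l) j i]
  ring

lemma jg_D_sum (D : R → R) (hadd : ∀ a b, D (a + b) = D a + D b) {ι : Type*} (s : Finset ι)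
    (u : ι → R) : D (∑ i ∈ s, u i) = ∑ i ∈ s, D (u i) := by
  have h := map_sum (AddMonoidHom.mk' D hadd) u s
  exact h

lemma jg_D_mul (D : R → R) (hadd : ∀ a b, D (a + b) = D a + D b)
    (hmul : ∀ a b, D (a * b) = a * D b + D a * b) (M M' : Matrix (Fin n) (Fin n) R) :
    (M * M').map D = M * M'.map D + M.map D * M' := by
  ext a b
  simp only [Matrix.map_apply, Matrix.mul_apply, Matrix.add_apply, jg_D_sum D hadd, hmul,
    Finset.sum_add_distrib]

/-- derivative of the cost along a derivation -/
lemma jg_D_cost (D : R → R) (hadd : ∀ a b, D (a + b) = D a + D b)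
    (hmul : ∀ a b, D (a * b) = a * D b + D a * b)
    (A : Fin N → Matrix (Fin n) (Fin n) R) (hA : ∀ l, (A l)ᵀ = A l)
    (hDA : ∀ l a b, D (A l a b) = 0) (Q : Matrix (Fin n) (Fin n) R)
    (hQ : Qᵀ * Q = 1) :
    D (jgF A Q) = 2 * ∑ k, ∑ j, jgGam A Q k j * (Qᵀ * Q.map D) j k := by
  set W := Qᵀ * Q.map D with hW
  have hQ' : Q * Qᵀ = 1 := mul_eq_one_comm.mp hQ
  have hDQ : Q.map D = Q * W := by
    rw [hW, ← Matrix.mul_assoc, hQ', Matrix.one_mul]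
  have hD0 : D 0 = 0 := by simpa using hadd 0 0
  have hD1 : D 1 = 0 := by simpa using hmul 1 1
  have hWt : Wᵀ = - W := by
    have h1 := jg_D_mul D hadd hmul Qᵀ Q
    have h2 : (Qᵀ * Q).map D = 0 := by
      rw [hQ]
      ext a b
      rw [Matrix.map_apply, Matrix.one_apply]
      split_ifs <;> simp [hD0, hD1]
    rw [h2, Matrix.transpose_map] at h1
    have h3 : Wᵀ = (Q.map D)ᵀ * Q := by
      rw [hW, Matrix.transpose_mul, Matrix.transpose_transpose]
    rw [h3]
    exact eq_neg_of_add_eq_zero_right h1.symm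
  have hDB : ∀ l, (jgB (A l) Q).map D = jgB (A l) Q * W - W * jgB (A l) Q := by
    intro l
    have hA0 : (A l).map D = 0 := by
      ext a b
      simp [hDA]
    unfold jgB
    rw [jg_D_mul D hadd hmul, jg_D_mul D hadd hmul, hA0, Matrix.mul_zero, zero_add,
      Matrix.transpose_map, hDQ, Matrix.transpose_mul, hWt]
    simp only [Matrix.mul_assoc, Matrix.neg_mul, sub_eq_add_neg]
  have hWa : ∀ a b, W b a = - W a b := fun a b => by
    have := congrFun (congrFun hWt a) b
    simpa using this
  have hdiag : ∀ l k, D (jgB (A l) Q k k) = 2 * ∑ j, jgB (A l) Q k j * W j k := by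
    intro l k
    have h := congrFun (congrFun (hDB l) k) k
    rw [Matrix.map_apply, Matrix.sub_apply, Matrix.mul_apply, Matrix.mul_apply] at h
    rw [h, two_mul, sub_eq_add_neg, ← Finset.sum_neg_distrib]
    congr 1
    refine Finset.sum_congr rfl fun j _ => ?_
    rw [hWa j k, jgB_symm' (hA l) k j]
    ring
  have h1 : D (jgF A Q) = ∑ l, ∑ k, ∑ j, 4 * (jgB (A l) Q k k * jgB (A l) Q k j * W j k) := by
    unfold jgF
    rw [jg_D_sum D hadd]
    refine Finset.sum_congr rfl fun l _ => ?_
    rw [jg_D_sum D hadd]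
    refine Finset.sum_congr rfl fun k _ => ?_
    rw [pow_two, hmul, hdiag]
    simp only [Finset.mul_sum, Finset.sum_mul, ← Finset.sum_add_distrib]
    refine Finset.sum_congr rfl fun j _ => ?_
    ring
  have h2 : ∀ l, ∑ k, ∑ j, 4 * (jgB (A l) Q k k * jgB (A l) Q k j * W j k) =
      ∑ k, ∑ j, 2 * ((jgB (A l) Q k k - jgB (A l) Q j j) * jgB (A l) Q k j * W j k) := by
    intro l
    have h3 : ∑ k, ∑ j, 2 * (jgB (A l) Q k k * jgB (A l) Q k j * W j k) =
        ∑ k, ∑ j, 2 * (- jgB (A l) Q j j * jgB (A l) Q k j * W j k) := by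
      rw [Finset.sum_comm]
      refine Finset.sum_congr rfl fun k _ => Finset.sum_congr rfl fun j _ => ?_
      rw [hWa j k, jgB_symm' (hA l) k j]
      ring
    have h4 : ∑ k, ∑ j, 4 * (jgB (A l) Q k k * jgB (A l) Q k j * W j k) =
        ∑ k, ∑ j, 2 * (jgB (A l) Q k k * jgB (A l) Q k j * W j k) +
        ∑ k, ∑ j, 2 * (jgB (A l) Q k k * jgB (A l) Q k j * W j k) := by
      simp only [← Finset.sum_add_distrib]
      refine Finset.sum_congr rfl fun k _ => Finset.sum_congr rfl fun j _ => ?_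
      ring
    rw [h4]
    nth_rewrite 2 [h3]
    simp only [← Finset.sum_add_distrib]
    refine Finset.sum_congr rfl fun k _ => Finset.sum_congr rfl fun j _ => ?_
    ring
  rw [h1, Finset.sum_congr rfl fun l _ => h2 l, Finset.mul_sum, Finset.sum_comm]
  refine Finset.sum_congr rfl fun k _ => ?_
  rw [Finset.mul_sum, Finset.sum_comm]
  refine Finset.sum_congr rfl fun j _ => ?_
  unfold jgGam
  rw [Finset.sum_mul, Finset.mul_sum]

end Cost

lemma jg_orth_le {n : ℕ} {Q : Matrix (Fin n) (Fin n) ℝ} (hQ : Qᵀ * Q = 1) (a b : Fin n) :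
    |Q a b| ≤ 1 := by
  have h := congrFun (congrFun hQ b) b
  rw [Matrix.mul_apply, Matrix.one_apply_eq] at h
  simp only [Matrix.transpose_apply] at h
  have h1 : Q a b * Q a b ≤ 1 := by
    rw [← h]
    exact Finset.single_le_sum (f := fun x => Q x b * Q x b) (fun i _ => mul_self_nonneg _)
      (Finset.mem_univ a)
  rw [abs_le]
  constructor <;> nlinarith

/-- contradiction in the field of asymptotic numbers -/
lemma jg_no_seq {n N : ℕ} (A : Fin N → Matrix (Fin n) (Fin n) ℝ) (hA : ∀ l, (A l)ᵀ = A l)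
    (fs : ℝ) (σ : JgScale) (Q : ℕ → Matrix (Fin n) (Fin n) ℝ) (hQ : ∀ m, (Q m)ᵀ * Q m = 1)
    (hF : Tendsto (fun m => |jgF A (Q m) - fs| ^ σ.s m) atTop (nhds (Real.exp (-1))))
    (u : ℕ → ℝ) (hu : Tendsto u atTop (nhds (Real.exp (-1))))
    (hG : ∀ i j m, |jgGam A (Q m) i j| ^ σ.s m ≤ u m) : False := by
  classical
  have hQR : ∀ a b, (fun m => ((Q m a b : ℝ) : ℂ)) ∈ jgRing σ := by
    intro a b
    refine jg_mem_of_le (jgRing σ).one_mem fun m => ?_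
    rw [Complex.norm_real]
    simpa using jg_orth_le (hQ m) a b
  set Qr : Matrix (Fin n) (Fin n) (jgRing σ) := fun a b => ⟨_, hQR a b⟩ with hQr
  set Ar : Fin N → Matrix (Fin n) (Fin n) (jgRing σ) :=
    fun l => (A l).map (fun r : ℝ => algebraMap ℂ (jgRing σ) (r : ℂ)) with hAr
  set fr : jgRing σ := algebraMap ℂ (jgRing σ) (fs : ℂ) with hfr
  have eQ : ∀ m, Qr.map (jgEv m) = (Q m).map (Complex.ofRealHom) := fun m => rfl
  have eA : ∀ m l, (Ar l).map (jgEv m) = (A l).map (Complex.ofRealHom) := fun m l => rfl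
  have eF : ∀ m, ((jgF Ar Qr - fr : jgRing σ) : ℕ → ℂ) m = ((jgF A (Q m) - fs : ℝ) : ℂ) := by
    intro m
    rw [← jgEv_apply, map_sub, jgF_map]
    simp only [eQ, eA]
    rw [← jgF_map]
    push_cast
    rfl
  have eG : ∀ i j m, ((jgGam Ar Qr i j : jgRing σ) : ℕ → ℂ) m =
      ((jgGam A (Q m) i j : ℝ) : ℂ) := by
    intro i j m
    rw [← jgEv_apply, jgGam_map]
    simp only [eQ, eA]
    rw [← jgGam_map]
    rfl
  have hArs : ∀ l, (Ar l)ᵀ = Ar l := by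
    intro l
    simp only [hAr]
    rw [← Matrix.transpose_map, hA]
  have hQro : Qrᵀ * Qr = 1 := by
    ext a b m
    have h1 := congrFun (congrFun (hQ m) a) b
    change jgEv m ((Qrᵀ * Qr) a b) = jgEv m ((1 : Matrix (Fin n) (Fin n) (jgRing σ)) a b)
    have h2 : (Qrᵀ * Qr).map (jgEv m) = (1 : Matrix (Fin n) (Fin n) (jgRing σ)).map (jgEv m) := by
      rw [Matrix.map_mul, Matrix.transpose_map, eQ, ← Matrix.transpose_map, ← Matrix.map_mul, hQ,
        Matrix.map_one _ (map_zero _) (map_one _), Matrix.map_one _ (map_zero _) (map_one _)]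
    exact congrFun (congrFun h2 a) b
  -- pass to the field
  have hv := jgV_na (σ := σ)
  obtain ⟨D, hadd, hmul, hconst, hD⟩ := jg_exists_D hv (jgV_sph (σ := σ))
  set QL : Matrix (Fin n) (Fin n) (jgL σ) := Qr.map jgMk with hQL
  set AL : Fin N → Matrix (Fin n) (Fin n) (jgL σ) := fun l => (Ar l).map jgMk with hAL
  have hALs : ∀ l, (AL l)ᵀ = AL l := by
    intro l
    simp only [hAL]
    rw [← Matrix.transpose_map, hArs]
  have hQLo : QLᵀ * QL = 1 := by
    exact jg_orth_map jgMk hQro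
  have hDA : ∀ l a b, D (AL l a b) = 0 := by
    intro l a b
    exact hconst ((A l a b : ℝ) : ℂ)
  have hvF : jgV σ (jgF AL QL - jgMk fr) = Real.exp (-1) := by
    rw [hAL, hQL, ← jgF_map, ← map_sub, jgV_mk]
    refine jgN_eq ((hF.mono_left jg_hyper_le).congr fun m => ?_)
    rw [eF, Complex.norm_real, Real.norm_eq_abs]
  have hvG : ∀ i j, jgV σ (jgGam AL QL i j) ≤ Real.exp (-1) := by
    intro i j
    rw [hAL, hQL, ← jgGam_map, jgV_mk]
    refine le_of_tendsto_of_tendsto' (jgN_tendsto _) (hu.mono_left jg_hyper_le) fun m => ?_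
    rw [eG, Complex.norm_real, Real.norm_eq_abs]
    exact hG i j m
  have hvQ : ∀ a b, jgV σ (QL a b) ≤ 1 := by
    intro a b
    change jgV σ (jgMk (Qr a b)) ≤ 1
    rw [jgV_mk]
    refine le_of_tendsto' (jgN_tendsto _) fun m => ?_
    refine Real.rpow_le_one (norm_nonneg _) ?_ (σ.pos m).le
    change ‖((Q m a b : ℝ) : ℂ)‖ ≤ 1
    rw [Complex.norm_real]
    exact jg_orth_le (hQ m) a b
  have hvD : ∀ a, jgV σ a ≤ 1 → jgV σ (D a) < 1 := by
    intro a ha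
    by_cases h0 : a = 0
    · have : D 0 = 0 := by simpa using hadd 0 0
      rw [h0, this, map_zero]
      exact one_pos
    · have h1 := hD a h0
      rcases ha.lt_or_eq with h | h
      · have h2 := hv.na (D a - jgR _ (Real.log (jgV σ a)) * a) (jgR _ (Real.log (jgV σ a)) * a)
        rw [sub_add_cancel] at h2
        exact h2.trans_lt (max_lt (h1.trans h) ((hv.const_mul _ a).trans_lt h))
      · rw [h, Real.log_one] at h1
        simpa [jgR] using h1
  have hexp : (0 : ℝ) < Real.exp (-1) := Real.exp_pos _
  have hDF : jgV σ (D (jgF AL QL - jgMk fr)) < Real.exp (-1) := by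
    have hfr0 : D (jgMk fr) = 0 := hconst (fs : ℂ)
    have h1 : D (jgF AL QL - jgMk fr) = D (jgF AL QL) := by
      have := hadd (jgF AL QL - jgMk fr) (jgMk fr)
      rw [sub_add_cancel, hfr0, add_zero] at this
      exact this.symm
    rw [h1, jg_D_cost D hadd hmul AL hALs hDA QL hQLo]
    have h2 : (2 : jgL σ) = algebraMap ℂ (jgL σ) 2 := (map_ofNat (algebraMap ℂ (jgL σ)) 2).symm
    rw [h2]
    refine (hv.const_mul _ _).trans_lt ?_
    refine hv.sum_lt _ _ _ hexp fun k _ => hv.sum_lt _ _ _ hexp fun j _ => ?_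
    rw [map_mul]
    have h3 : jgV σ ((QLᵀ * QL.map D) j k) < 1 := by
      rw [Matrix.mul_apply]
      refine hv.sum_lt _ _ _ one_pos fun a _ => ?_
      rw [map_mul]
      exact mul_lt_one_of_nonneg_of_lt_one_right (hvQ _ _) (AbsoluteValue.nonneg _ _)
        (hvD _ (hvQ _ _))
    calc jgV σ (jgGam AL QL k j) * jgV σ ((QLᵀ * QL.map D) j k)
        ≤ Real.exp (-1) * jgV σ ((QLᵀ * QL.map D) j k) :=
          mul_le_mul_of_nonneg_right (hvG k j) (AbsoluteValue.nonneg _ _)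
      _ < Real.exp (-1) * 1 := mul_lt_mul_of_pos_left h3 hexp
      _ = Real.exp (-1) := mul_one _
  have hne : jgF AL QL - jgMk fr ≠ 0 := by
    intro h
    rw [h, map_zero] at hvF
    exact hexp.ne hvF
  have h5 := hD _ hne
  rw [hvF, Real.log_exp] at h5
  have h6 := hv.sub (D (jgF AL QL - jgMk fr))
    (D (jgF AL QL - jgMk fr) - jgR (jgL σ) (-1) * (jgF AL QL - jgMk fr))
  rw [sub_sub_cancel, map_mul, hvF] at h6
  have h7 : jgV σ (jgR (jgL σ) (-1)) = 1 := hv.triv _ (by simp)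
  rw [h7, one_mul] at h6
  exact absurd h6 (not_le.mpr (max_lt hDF h5))

/-- The gradient inequality. -/
lemma jg_KL {n N : ℕ} (A : Fin N → Matrix (Fin n) (Fin n) ℝ) (hA : ∀ l, (A l)ᵀ = A l)
    (fs : ℝ) : ∃ ε : ℝ, 0 < ε ∧ ε < 1 ∧ ∃ η : ℝ, 0 < η ∧ ∀ Q : Matrix (Fin n) (Fin n) ℝ,
      Qᵀ * Q = 1 → 0 < |jgF A Q - fs| → |jgF A Q - fs| < η →
      |jgF A Q - fs| ^ (1 - ε) ≤ ∑ i, ∑ j, |jgGam A Q i j| := by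
  by_contra hcon
  push Not at hcon
  have hε : ∀ m : ℕ, (0 : ℝ) < 1 / ((m : ℝ) + 2) := fun m => by positivity
  have hε1 : ∀ m : ℕ, 1 / ((m : ℝ) + 2) < 1 := fun m => by
    rw [div_lt_one (by positivity)]
    have : (0 : ℝ) ≤ m := Nat.cast_nonneg m
    linarith
  choose Q hQ hpos hlt hG using fun m : ℕ => hcon _ (hε m) (hε1 m) (Real.exp (-((m : ℝ) + 1)))
    (Real.exp_pos _)
  have hlog : ∀ m : ℕ, (m : ℝ) + 1 < - Real.log |jgF A (Q m) - fs| := by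
    intro m
    have := Real.log_lt_log (hpos m) (hlt m)
    rw [Real.log_exp] at this
    linarith
  have hlog0 : ∀ m, 0 < - Real.log |jgF A (Q m) - fs| := fun m => by
    have := hlog m
    have h : (0 : ℝ) ≤ m := Nat.cast_nonneg m
    linarith
  have hsle : ∀ m, 1 / (- Real.log |jgF A (Q m) - fs|) ≤ 1 / ((m : ℝ) + 1) := fun m =>
    one_div_le_one_div_of_le (by positivity) (hlog m).le
  set σ : JgScale :=
    { s := fun m => 1 / (- Real.log |jgF A (Q m) - fs|)
      pos := fun m => one_div_pos.mpr (hlog0 m)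
      le_one := fun m => (hsle m).trans (by
        rw [div_le_one (by positivity)]
        have h : (0 : ℝ) ≤ m := Nat.cast_nonneg m
        linarith)
      lim := squeeze_zero (fun m => (one_div_pos.mpr (hlog0 m)).le) hsle
        tendsto_one_div_add_atTop_nhds_zero_nat } with hσ
  have hsl : ∀ m, Real.log |jgF A (Q m) - fs| * σ.s m = -1 := by
    intro m
    have : Real.log |jgF A (Q m) - fs| ≠ 0 := fun h => by
      have := hlog0 m
      rw [h, neg_zero] at this
      exact lt_irrefl _ this
    simp only [hσ]
    field_simp
  refine jg_no_seq A hA fs σ Q hQ ?_ (fun m => Real.exp (-1 * (1 - 1 / ((m : ℝ) + 2)))) ?_ ?_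
  · refine tendsto_const_nhds.congr fun m => ?_
    rw [Real.rpow_def_of_pos (hpos m), hsl]
  · have h1 : Tendsto (fun m : ℕ => 1 / ((m : ℝ) + 2)) atTop (nhds 0) := by
      refine squeeze_zero (fun m => (hε m).le) (fun m => ?_)
        tendsto_one_div_add_atTop_nhds_zero_nat
      exact one_div_le_one_div_of_le (by positivity) (by linarith)
    have h2 := ((tendsto_const_nhds (x := (1 : ℝ))).sub h1).const_mul (-1 : ℝ)
    have h3 := (Real.continuous_exp.tendsto _).comp h2
    simpa [Function.comp_def] using h3
  · intro i j m
    have h1 : |jgGam A (Q m) i j| ≤ |jgF A (Q m) - fs| ^ (1 - 1 / ((m : ℝ) + 2)) := by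
      refine le_trans ?_ (hG m).le
      refine le_trans ?_ (Finset.single_le_sum (f := fun a => ∑ b, |jgGam A (Q m) a b|)
        (fun a _ => Finset.sum_nonneg fun b _ => abs_nonneg _) (Finset.mem_univ i))
      exact Finset.single_le_sum (f := fun b => |jgGam A (Q m) i b|)
        (fun b _ => abs_nonneg _) (Finset.mem_univ j)
    refine (Real.rpow_le_rpow (abs_nonneg _) h1 (σ.pos m).le).trans ?_
    rw [← Real.rpow_mul (hpos m).le, Real.rpow_def_of_pos (hpos m), mul_comm (1 - _) (σ.s m),
      ← mul_assoc, hsl]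

section Givens

variable {n N : ℕ} {i j : Fin n}

lemma jg_mulG_i (hij : i ≠ j) (M : Matrix (Fin n) (Fin n) ℝ) (t : ℝ) (a : Fin n) :
    (M * givensR n i j t) a i = Real.cos t * M a i + Real.sin t * M a j := by
  rw [Matrix.mul_apply, Finset.sum_eq_add i j hij]
  · simp [givensR, hij, hij.symm, mul_comm]
  · rintro c - ⟨h1, h2⟩
    simp [givensR, hij, hij.symm, h1, h2]
  · simp
  · simp

lemma jg_mulG_j (hij : i ≠ j) (M : Matrix (Fin n) (Fin n) ℝ) (t : ℝ) (a : Fin n) :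
    (M * givensR n i j t) a j = - Real.sin t * M a i + Real.cos t * M a j := by
  rw [Matrix.mul_apply, Finset.sum_eq_add i j hij]
  · simp [givensR, hij, hij.symm, mul_comm]
  · rintro c - ⟨h1, h2⟩
    simp [givensR, hij, hij.symm, h1, h2]
  · simp
  · simp

lemma jg_mulG_o (M : Matrix (Fin n) (Fin n) ℝ) (t : ℝ) (a b : Fin n)
    (hi : b ≠ i) (hj : b ≠ j) :
    (M * givensR n i j t) a b = M a b := by
  rw [Matrix.mul_apply, Finset.sum_eq_single b]
  · simp [givensR, hi, hj]
  · rintro c - h1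
    simp [givensR, hi, hj, h1]
  · simp

lemma jg_givens_orth (hij : i ≠ j) (t : ℝ) :
    (givensR n i j t)ᵀ * givensR n i j t = 1 := by
  have hcs := Real.cos_sq_add_sin_sq t
  ext a b
  by_cases hbi : b = i
  · rw [hbi, jg_mulG_i hij, Matrix.transpose_apply, Matrix.transpose_apply]
    by_cases hai : a = i
    · rw [hai, Matrix.one_apply_eq]
      simp [givensR, hij, hij.symm]
      linarith
    · by_cases haj : a = j
      · simp [givensR, haj, hij, hij.symm]
        ring
      · simp [givensR, hai, haj, hij, hij.symm, Ne.symm hai, Ne.symm haj]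
  · by_cases hbj : b = j
    · rw [hbj, jg_mulG_j hij, Matrix.transpose_apply, Matrix.transpose_apply]
      by_cases hai : a = i
      · simp [givensR, hai, hij, hij.symm]
        ring
      · by_cases haj : a = j
        · rw [haj, Matrix.one_apply_eq]
          simp [givensR, hij, hij.symm]
          linarith
        · simp [givensR, hai, haj, hij, hij.symm, Ne.symm hai, Ne.symm haj]
    · rw [jg_mulG_o _ _ _ _ hbi hbj, Matrix.transpose_apply, Matrix.one_apply]
      simp [givensR, hbi, hbj, eq_comm]

lemma jg_orth_mulG (hij : i ≠ j) (t : ℝ) {Q : Matrix (Fin n) (Fin n) ℝ} (hQ : Qᵀ * Q = 1) :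
    (Q * givensR n i j t)ᵀ * (Q * givensR n i j t) = 1 := by
  rw [Matrix.transpose_mul, Matrix.mul_assoc, ← Matrix.mul_assoc Qᵀ, hQ, Matrix.one_mul,
    jg_givens_orth hij]

lemma jgB_givens (A Q : Matrix (Fin n) (Fin n) ℝ) (t : ℝ) :
    jgB A (Q * givensR n i j t) = ((jgB A Q)ᵀ * givensR n i j t)ᵀ * givensR n i j t := by
  simp only [jgB, Matrix.transpose_mul, Matrix.transpose_transpose, Matrix.mul_assoc]

lemma jgF_givens (hij : i ≠ j) (A : Fin N → Matrix (Fin n) (Fin n) ℝ) (hA : ∀ l, (A l)ᵀ = A l)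
    (Q : Matrix (Fin n) (Fin n) ℝ) (t : ℝ) :
    jgF A (Q * givensR n i j t) = jgF A Q +
      (∑ l, ((jgB (A l) Q i i - jgB (A l) Q j j) ^ 2 - 4 * (jgB (A l) Q i j) ^ 2) / 4) *
        (Real.cos (4 * t) - 1) + jgGam A Q i j * Real.sin (4 * t) := by
  have key : ∀ l, ∑ k, (jgB (A l) (Q * givensR n i j t) k k) ^ 2 =
      ∑ k, (jgB (A l) Q k k) ^ 2 +
      ((jgB (A l) Q i i - jgB (A l) Q j j) ^ 2 - 4 * (jgB (A l) Q i j) ^ 2) / 4 *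
        (Real.cos (4 * t) - 1) +
      (jgB (A l) Q i i - jgB (A l) Q j j) * jgB (A l) Q i j * Real.sin (4 * t) := by
    intro l
    have hs := jgB_symm' (Q := Q) (hA l) i j
    have h1 : ∑ k, ((jgB (A l) (Q * givensR n i j t) k k) ^ 2 - (jgB (A l) Q k k) ^ 2) =
        ((jgB (A l) Q i i - jgB (A l) Q j j) ^ 2 - 4 * (jgB (A l) Q i j) ^ 2) / 4 *
        (Real.cos (4 * t) - 1) +
      (jgB (A l) Q i i - jgB (A l) Q j j) * jgB (A l) Q i j * Real.sin (4 * t) := by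
      rw [Finset.sum_eq_add i j hij]
      · rw [jgB_givens, jg_mulG_i hij, jg_mulG_j hij]
        simp only [Matrix.transpose_apply, jg_mulG_i hij, jg_mulG_j hij]
        rw [← hs]
        have e4 : (4 : ℝ) * t = 2 * (2 * t) := by ring
        rw [e4, Real.cos_two_mul, Real.sin_two_mul, Real.cos_two_mul, Real.sin_two_mul]
        have hcs := Real.sin_sq_add_cos_sq t
        have hsin2 : Real.sin t ^ 2 = 1 - Real.cos t ^ 2 := by linarith
        have hsin3 : Real.sin t ^ 3 = Real.sin t * (1 - Real.cos t ^ 2) := by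
          rw [← hsin2]; ring
        have hsin4 : Real.sin t ^ 4 = (1 - Real.cos t ^ 2) ^ 2 := by
          rw [← hsin2]; ring
        ring_nf
        simp only [hsin2, hsin3, hsin4]
        ring
      · rintro c - ⟨h1, h2⟩
        rw [jgB_givens, jg_mulG_o _ _ _ _ h1 h2, Matrix.transpose_apply,
          jg_mulG_o _ _ _ _ h1 h2, Matrix.transpose_apply, sub_self]
      · simp
      · simp
    rw [Finset.sum_sub_distrib] at h1
    linarith
  unfold jgF jgGam
  rw [Finset.sum_congr rfl fun l _ => key l, Finset.sum_add_distrib, Finset.sum_add_distrib,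
    Finset.sum_mul, Finset.sum_mul]

lemma jgF_givens_deriv (hij : i ≠ j) (A : Fin N → Matrix (Fin n) (Fin n) ℝ)
    (hA : ∀ l, (A l)ᵀ = A l) (Q : Matrix (Fin n) (Fin n) ℝ) :
    deriv (fun t : ℝ => jgF A (Q * givensR n i j t)) 0 = 4 * jgGam A Q i j := by
  simp only [jgF_givens hij A hA Q]
  set α := ∑ l, ((jgB (A l) Q i i - jgB (A l) Q j j) ^ 2 - 4 * (jgB (A l) Q i j) ^ 2) / 4
  have h0 : HasDerivAt (fun t : ℝ => 4 * t) 4 0 := by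
    simpa using (hasDerivAt_id (0 : ℝ)).const_mul 4
  have h1 : HasDerivAt (fun t : ℝ => Real.cos (4 * t)) (-Real.sin (4 * 0) * 4) 0 := h0.cos
  have h2 : HasDerivAt (fun t : ℝ => Real.sin (4 * t)) (Real.cos (4 * 0) * 4) 0 := h0.sin
  have h3 := (((h1.sub_const 1).const_mul α).const_add (jgF A Q)).add (h2.const_mul (jgGam A Q i j))
  have h4 := h3.deriv
  rw [mul_zero, Real.sin_zero, Real.cos_zero] at h4
  refine Eq.trans ?_ (h4.trans (by ring))
  rfl

lemma jg_step_le (hij : i ≠ j) (t : ℝ) {Q : Matrix (Fin n) (Fin n) ℝ} (hQ : Qᵀ * Q = 1)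
    (a b : Fin n) : |(Q * givensR n i j t) a b - Q a b| ≤ 2 * |t| := by
  have hs : |Real.sin t| ≤ |t| := Real.abs_sin_le_abs
  have hc : |Real.cos t - 1| ≤ |t| := by
    have := Real.abs_cos_sub_cos_le t 0
    simpa using this
  have hb : ∀ x y u w : ℝ, |u| ≤ |t| → |w| ≤ |t| → |x| ≤ 1 → |y| ≤ 1 →
      |u * x + w * y| ≤ 2 * |t| := by
    intro x y u w hu hw hx hy
    refine (abs_add_le _ _).trans ?_
    rw [abs_mul, abs_mul]
    have h1 : |u| * |x| ≤ |t| * 1 := mul_le_mul hu hx (abs_nonneg _) (abs_nonneg _)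
    have h2 : |w| * |y| ≤ |t| * 1 := mul_le_mul hw hy (abs_nonneg _) (abs_nonneg _)
    linarith
  by_cases hbi : b = i
  · rw [hbi, jg_mulG_i hij]
    have := hb (Q a i) (Q a j) _ _ hc hs (jg_orth_le hQ _ _) (jg_orth_le hQ _ _)
    convert this using 2
    ring
  · by_cases hbj : b = j
    · rw [hbj, jg_mulG_j hij]
      have := hb (Q a i) (Q a j) (- Real.sin t) _ (by rwa [abs_neg]) hc
        (jg_orth_le hQ _ _) (jg_orth_le hQ _ _)
      convert this using 2
      ring
    · rw [jg_mulG_o _ _ _ _ hbi hbj, sub_self, abs_zero]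
      positivity

end Givens

/-- one-dimensional maximisation -/
lemma jg_oned (α β θ : ℝ)
    (hmax : ∀ t, α * (Real.cos (4 * t) - 1) + β * Real.sin (4 * t) ≤
      α * (Real.cos (4 * θ) - 1) + β * Real.sin (4 * θ))
    (hmin : ∀ t, (∀ s, α * (Real.cos (4 * s) - 1) + β * Real.sin (4 * s) ≤
      α * (Real.cos (4 * t) - 1) + β * Real.sin (4 * t)) → |θ| ≤ |t|) :
    |β| * |θ| ≤ α * (Real.cos (4 * θ) - 1) + β * Real.sin (4 * θ) ∧
    β ^ 2 ≤ 2 * (α * (Real.cos (4 * θ) - 1) + β * Real.sin (4 * θ) + α) *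
      (α * (Real.cos (4 * θ) - 1) + β * Real.sin (4 * θ)) ∧
    (α * (Real.cos (4 * θ) - 1) + β * Real.sin (4 * θ) = 0 → θ = 0) := by
  have hθ : |θ| ≤ Real.pi / 4 := by
    set m := round (θ / (Real.pi / 2)) with hm
    have hpi := Real.pi_pos
    have e : 4 * (θ - m * (Real.pi / 2)) = 4 * θ - m * (2 * Real.pi) := by ring
    have h1 := hmin (θ - m * (Real.pi / 2)) (by
      rw [e, Real.cos_sub_int_mul_two_pi, Real.sin_sub_int_mul_two_pi]
      exact hmax)
    refine h1.trans ?_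
    have h2 := abs_sub_round (θ / (Real.pi / 2))
    rw [← hm] at h2
    have h3 : θ - m * (Real.pi / 2) = (θ / (Real.pi / 2) - m) * (Real.pi / 2) := by
      field_simp
    rw [h3, abs_mul, abs_of_pos (by positivity : 0 < Real.pi / 2)]
    calc |θ / (Real.pi / 2) - m| * (Real.pi / 2) ≤ 1 / 2 * (Real.pi / 2) :=
          mul_le_mul_of_nonneg_right h2 (by positivity)
      _ = Real.pi / 4 := by ring
  have hd : β * Real.cos (4 * θ) = α * Real.sin (4 * θ) := by
    have h0 : HasDerivAt (fun t : ℝ => 4 * t) 4 θ := by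
      simpa using (hasDerivAt_id θ).const_mul 4
    have h3 := ((h0.cos.sub_const 1).const_mul α).add (h0.sin.const_mul β)
    have h4 : IsLocalMax (fun t : ℝ => α * (Real.cos (4 * t) - 1) + β * Real.sin (4 * t)) θ :=
      Eventually.of_forall hmax
    have h5 := h4.hasDerivAt_eq_zero h3
    linarith
  set I := α * (Real.cos (4 * θ) - 1) + β * Real.sin (4 * θ) with hI
  set V := α * Real.cos (4 * θ) + β * Real.sin (4 * θ) with hV
  have hcs := Real.cos_sq_add_sin_sq (4 * θ)
  have hα : α = V * Real.cos (4 * θ) := by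
    rw [hV]
    linear_combination (-α) * hcs - Real.sin (4 * θ) * hd
  have hβ : β = V * Real.sin (4 * θ) := by
    rw [hV]
    linear_combination (-β) * hcs + Real.cos (4 * θ) * hd
  have hV0 : 0 ≤ V := by
    have h1 := hmax (θ + Real.pi / 4)
    have e : 4 * (θ + Real.pi / 4) = 4 * θ + Real.pi := by ring
    rw [e, Real.cos_add_pi, Real.sin_add_pi] at h1
    rw [hV]
    rw [hI] at h1
    nlinarith
  have e4 : 4 * θ = 2 * (2 * θ) := by ring
  have hIV : I = 2 * V * Real.sin (2 * θ) ^ 2 := by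
    have h1 : I = V - α := by rw [hI, hV]; ring
    have h2 : V * Real.cos (4 * θ) = V * (1 - 2 * Real.sin (2 * θ) ^ 2) := by
      rw [e4, Real.cos_two_mul, Real.cos_sq']
      ring
    rw [h1, hα, h2]
    ring
  have hβ2 : β = 2 * V * Real.sin (2 * θ) * Real.cos (2 * θ) := by
    rw [hβ, e4, Real.sin_two_mul]
    ring
  have hVI : I + α = V := by rw [hI, hV]; ring
  refine ⟨?_, ?_, ?_⟩
  · have h1 : |β| ≤ 2 * V * |Real.sin (2 * θ)| := by
      rw [hβ2, abs_mul, abs_mul, abs_of_nonneg (by positivity : 0 ≤ 2 * V)]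
      exact mul_le_of_le_one_right (by positivity) (Real.abs_cos_le_one _)
    have h2 : 2 / Real.pi * |2 * θ| ≤ |Real.sin (2 * θ)| := by
      refine Real.mul_abs_le_abs_sin ?_
      rw [abs_mul, abs_of_pos (by norm_num : (0 : ℝ) < 2)]
      linarith
    have h3 : |θ| ≤ |Real.sin (2 * θ)| := by
      refine le_trans ?_ h2
      rw [abs_mul, abs_of_pos (by norm_num : (0 : ℝ) < 2)]
      have : 1 ≤ 2 / Real.pi * 2 := by
        rw [div_mul_eq_mul_div, le_div_iff₀ Real.pi_pos]
        linarith [Real.pi_le_four]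
      nlinarith [abs_nonneg θ]
    calc |β| * |θ| ≤ (2 * V * |Real.sin (2 * θ)|) * |Real.sin (2 * θ)| :=
          mul_le_mul h1 h3 (abs_nonneg _) (by positivity)
      _ = I := by
          rw [hIV, ← sq_abs (Real.sin (2 * θ))]
          ring
  · rw [hVI, hIV, hβ2]
    have h1 := Real.cos_sq_le_one (2 * θ)
    have h2 : 0 ≤ 4 * V ^ 2 * Real.sin (2 * θ) ^ 2 := by positivity
    nlinarith [mul_le_mul_of_nonneg_left h1 h2]
  · intro h0
    have h1 := hmin 0 (by
      intro s
      have := hmax s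
      rw [h0] at this
      simpa using this)
    rw [abs_zero] at h1
    exact abs_eq_zero.mp (le_antisymm h1 (abs_nonneg _))

/-- summability from the gradient inequality -/
lemma jg_summable (e b θ : ℕ → ℝ) (he : ∀ k, 0 ≤ e k) (he0 : Tendsto e atTop (nhds 0))
    (hb : ∀ k, b k * |θ k| ≤ e k - e (k + 1)) (hanti : ∀ k, e (k + 1) ≤ e k)
    (hθ : ∀ k, e k = e (k + 1) → θ k = 0)
    (ε η C : ℝ) (hε : 0 < ε) (hε1 : ε < 1) (hη : 0 < η) (hC : 0 < C)
    (hKL : ∀ k, 0 < e k → e k < η → (e k) ^ (1 - ε) ≤ C * b k) :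
    Summable fun k => |θ k| := by
  obtain ⟨k0, hk0⟩ := eventually_atTop.mp (he0.eventually_lt_const hη)
  have key : ∀ k, k0 ≤ k → |θ k| ≤ C / ε * ((e k) ^ ε - (e (k + 1)) ^ ε) := by
    intro k hk
    rcases (he k).eq_or_lt with h | h
    · have h1 : e (k + 1) = 0 := le_antisymm ((hanti k).trans h.ge) (he _)
      rw [hθ k (by rw [h1, ← h]), ← h, h1]
      simp
    · have h1 := hKL k h (hk0 k hk)
      have h2 : (e (k + 1)) ^ ε ≤ (e k) ^ ε * (1 + ε * (e (k + 1) / e k - 1)) := by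
        have h3 := rpow_one_add_le_one_add_mul_self (s := e (k + 1) / e k - 1)
          (by have := div_nonneg (he (k + 1)) h.le; linarith) hε.le hε1.le
        rw [add_sub_cancel, Real.div_rpow (he _) h.le] at h3
        have h4 : 0 < (e k) ^ ε := Real.rpow_pos_of_pos h _
        rw [div_le_iff₀ h4] at h3
        linarith
      have h5 : (e k) ^ ε * (ε * ((e k - e (k + 1)) / e k)) ≤ (e k) ^ ε - (e (k + 1)) ^ ε := by
        have : (e k - e (k + 1)) / e k = - (e (k + 1) / e k - 1) := by
          field_simp
          ring
        rw [this]
        linarith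
      have h6 : (e k) ^ ε * (e k) ^ (1 - ε) = e k := by
        rw [← Real.rpow_add h, add_sub_cancel, Real.rpow_one]
      have h7 : 0 < (e k) ^ ε := Real.rpow_pos_of_pos h _
      have h8 : e k * |θ k| ≤ C * ((e k) ^ ε * (e k - e (k + 1))) := by
        calc e k * |θ k| = (e k) ^ ε * ((e k) ^ (1 - ε) * |θ k|) := by rw [← mul_assoc, h6]
          _ ≤ (e k) ^ ε * (C * b k * |θ k|) :=
              mul_le_mul_of_nonneg_left (mul_le_mul_of_nonneg_right h1 (abs_nonneg _)) h7.le
          _ = C * ((e k) ^ ε * (b k * |θ k|)) := by ring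
          _ ≤ C * ((e k) ^ ε * (e k - e (k + 1))) := by
              refine mul_le_mul_of_nonneg_left ?_ hC.le
              exact mul_le_mul_of_nonneg_left (hb k) h7.le
      calc |θ k| ≤ C * ((e k) ^ ε * (e k - e (k + 1))) / e k := by
            rw [le_div_iff₀ h]
            linarith
        _ = C / ε * ((e k) ^ ε * (ε * ((e k - e (k + 1)) / e k))) := by
            field_simp
        _ ≤ _ := mul_le_mul_of_nonneg_left h5 (by positivity)
  rw [← summable_nat_add_iff k0]
  refine summable_of_sum_range_le (c := C / ε * (e k0) ^ ε) (fun k => abs_nonneg _) fun m => ?_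
  have h1 : ∀ m, ∑ k ∈ Finset.range m, |θ (k + k0)| ≤
      C / ε * ((e k0) ^ ε - (e (m + k0)) ^ ε) := by
    intro m
    induction m with
    | zero => simp
    | succ m ih =>
      rw [Finset.sum_range_succ]
      have h2 := key (m + k0) (by omega)
      have h3 : m + k0 + 1 = m + 1 + k0 := by omega
      rw [h3] at h2
      linarith
  refine (h1 m).trans ?_
  have h4 : 0 ≤ (e (m + k0)) ^ ε := Real.rpow_nonneg (he _) _
  refine mul_le_mul_of_nonneg_left ?_ (by positivity)
  linarith

section Grad

variable {n N : ℕ}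

lemma jgF_line (A : Fin N → Matrix (Fin n) (Fin n) ℝ) (hA : ∀ l, (A l)ᵀ = A l)
    (Q H : Matrix (Fin n) (Fin n) ℝ) :
    HasDerivAt (fun t : ℝ => jgF A (Q + t • H))
      (∑ l, ∑ k, 4 * (jgB (A l) Q k k * (Qᵀ * A l * H) k k)) 0 := by
  have hB : ∀ l k (t : ℝ), jgB (A l) (Q + t • H) k k =
      jgB (A l) Q k k + t * (2 * (Qᵀ * A l * H) k k) + t ^ 2 * jgB (A l) H k k := by
    intro l k t
    have h1 : jgB (A l) (Q + t • H) = jgB (A l) Q + t • (Qᵀ * A l * H) + t • (Qᵀ * A l * H)ᵀ +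
        (t ^ 2) • jgB (A l) H := by
      simp only [jgB, Matrix.transpose_add, Matrix.transpose_smul, Matrix.add_mul, Matrix.mul_add,
        Matrix.smul_mul, Matrix.mul_smul, Matrix.transpose_mul, Matrix.transpose_transpose, hA,
        smul_add, smul_smul, pow_two, Matrix.mul_assoc]
      abel
    rw [h1]
    simp only [Matrix.add_apply, Matrix.smul_apply, Matrix.transpose_apply, smul_eq_mul]
    ring
  unfold jgF
  refine HasDerivAt.fun_sum fun l _ => HasDerivAt.fun_sum fun k _ => ?_
  simp only [hB]
  have h0 := hasDerivAt_id (0 : ℝ)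
  have h2 := (((h0.mul_const (2 * (Qᵀ * A l * H) k k)).const_add (jgB (A l) Q k k)).add
    ((h0.pow 2).mul_const (jgB (A l) H k k))).pow 2
  refine h2.congr_deriv ?_
  simp
  ring

lemma jg_grad_eq (A : Fin N → Matrix (Fin n) (Fin n) ℝ) (hA : ∀ l, (A l)ᵀ = A l)
    (g : Matrix (Fin n) (Fin n) ℝ → Matrix (Fin n) (Fin n) ℝ) (hg : IsGradR (jgF A) g)
    (Q : Matrix (Fin n) (Fin n) ℝ) (a b : Fin n) :
    g Q a b = ∑ l, 4 * (jgB (A l) Q b b * (Qᵀ * A l) b a) := by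
  have h1 := (hg Q (Matrix.single a b 1)).unique (jgF_line A hA Q (Matrix.single a b 1))
  have h2 : ∑ x, ∑ y, g Q x y * (Matrix.single a b (1 : ℝ)) x y = g Q a b := by
    rw [Finset.sum_eq_single a, Finset.sum_eq_single b]
    · simp
    · intro y _ hy
      simp [Matrix.single_apply, hy.symm]
    · simp
    · intro x _ hx
      refine Finset.sum_eq_zero fun y _ => ?_
      simp [Matrix.single_apply, hx.symm]
    · simp
  rw [h2] at h1
  rw [h1]
  refine Finset.sum_congr rfl fun l _ => ?_
  rw [Finset.sum_eq_single b]
  · simp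
  · intro y _ hy
    rw [Matrix.mul_single_apply_of_ne _ _ _ _ _ hy]
    simp
  · simp

lemma jg_proj_eq (A : Fin N → Matrix (Fin n) (Fin n) ℝ) (hA : ∀ l, (A l)ᵀ = A l)
    (g : Matrix (Fin n) (Fin n) ℝ → Matrix (Fin n) (Fin n) ℝ) (hg : IsGradR (jgF A) g)
    (Q : Matrix (Fin n) (Fin n) ℝ) :
    projGradR g Q = Q * Matrix.of fun a b => -2 * jgGam A Q a b := by
  have h1 : ∀ a b, (Qᵀ * g Q) a b = ∑ l, 4 * (jgB (A l) Q b b * jgB (A l) Q b a) := by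
    intro a b
    rw [Matrix.mul_apply]
    simp only [jg_grad_eq A hA g hg, Matrix.transpose_apply, Finset.mul_sum]
    rw [Finset.sum_comm]
    refine Finset.sum_congr rfl fun l _ => ?_
    have e : jgB (A l) Q b a = ∑ x, (Qᵀ * A l) b x * Q x a := Matrix.mul_apply
    rw [e, Finset.mul_sum, Finset.mul_sum]
    refine Finset.sum_congr rfl fun x _ => ?_
    ring
  unfold projGradR
  congr 1
  ext a b
  rw [Matrix.smul_apply, Matrix.sub_apply, Matrix.transpose_apply, h1, h1, Matrix.of_apply, jgGam,
    ← Finset.sum_sub_distrib, Finset.mul_sum, smul_eq_mul, Finset.mul_sum]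
  refine Finset.sum_congr rfl fun l _ => ?_
  rw [jgB_symm' (hA l) b a]
  ring

lemma jg_frob_ge {Q : Matrix (Fin n) (Fin n) ℝ} (hQ : Qᵀ * Q = 1) (X : Matrix (Fin n) (Fin n) ℝ)
    (a b : Fin n) : |X a b| ≤ frobR (Q * X) := by
  have h1 : ∑ x, ∑ y, ((Q * X) x y) ^ 2 = ∑ y, ((Q * X)ᵀ * (Q * X)) y y := by
    rw [Finset.sum_comm]
    refine Finset.sum_congr rfl fun y _ => ?_
    rw [Matrix.mul_apply]
    refine Finset.sum_congr rfl fun x _ => ?_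
    rw [Matrix.transpose_apply, pow_two]
  have h2 : (Q * X)ᵀ * (Q * X) = Xᵀ * X := by
    rw [Matrix.transpose_mul, Matrix.mul_assoc, ← Matrix.mul_assoc Qᵀ, hQ, Matrix.one_mul]
  unfold frobR
  rw [h1, h2]
  refine Real.abs_le_sqrt ?_
  refine le_trans ?_ (Finset.single_le_sum (f := fun y => (Xᵀ * X) y y) (fun y _ => ?_)
    (Finset.mem_univ b))
  · change X a b ^ 2 ≤ (Xᵀ * X) b b
    rw [Matrix.mul_apply, pow_two]
    exact Finset.single_le_sum (f := fun x => Xᵀ b x * X x b) (fun x _ => mul_self_nonneg _)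
      (Finset.mem_univ a)
  · change 0 ≤ (Xᵀ * X) y y
    rw [Matrix.mul_apply]
    exact Finset.sum_nonneg fun x _ => mul_self_nonneg _

lemma jgF_bdd (A : Fin N → Matrix (Fin n) (Fin n) ℝ) {Q : Matrix (Fin n) (Fin n) ℝ}
    (hQ : Qᵀ * Q = 1) : jgF A Q ≤ ∑ l, ∑ _k : Fin n, (∑ x, ∑ y, |A l x y|) ^ 2 := by
  unfold jgF
  refine Finset.sum_le_sum fun l _ => Finset.sum_le_sum fun k _ => ?_
  rw [← sq_abs]
  refine pow_le_pow_left₀ (abs_nonneg _) ?_ 2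
  unfold jgB
  rw [Matrix.mul_apply, Finset.sum_comm]
  refine (Finset.abs_sum_le_sum_abs _ _).trans (Finset.sum_le_sum fun y _ => ?_)
  rw [abs_mul]
  refine (mul_le_of_le_one_right (abs_nonneg _) (jg_orth_le hQ _ _)).trans ?_
  rw [Matrix.mul_apply]
  refine (Finset.abs_sum_le_sum_abs _ _).trans (Finset.sum_le_sum fun x _ => ?_)
  rw [abs_mul]
  exact mul_le_of_le_one_left (abs_nonneg _) (jg_orth_le hQ _ _)

lemma jgF_nonneg (A : Fin N → Matrix (Fin n) (Fin n) ℝ) (Q : Matrix (Fin n) (Fin n) ℝ) :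
    0 ≤ jgF A Q :=
  Finset.sum_nonneg fun _ _ => Finset.sum_nonneg fun _ _ => sq_nonneg _

lemma jgB_cont (A : Matrix (Fin n) (Fin n) ℝ) (a b : Fin n) :
    Continuous fun Q : Matrix (Fin n) (Fin n) ℝ => jgB A Q a b := by
  unfold jgB
  exact ((continuous_id.matrix_transpose.matrix_mul continuous_const).matrix_mul
    continuous_id).matrix_elem a b

lemma jgGam_cont (A : Fin N → Matrix (Fin n) (Fin n) ℝ) (a b : Fin n) :
    Continuous fun Q : Matrix (Fin n) (Fin n) ℝ => jgGam A Q a b := by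
  unfold jgGam
  exact continuous_finsetSum _ fun l _ =>
    ((jgB_cont (A l) a a).sub (jgB_cont (A l) b b)).mul (jgB_cont (A l) a b)

end Grad

/-- Global convergence of the Jacobi-G algorithm on O(n) for the simultaneous approximate
diagonalization cost of symmetric matrices: for any starting point, the Jacobi-G
iterates converge to a single limit point, which is a stationary point of `f` on O(n). -/
theorem jacobiG_global_convergence_matrices {n L : ℕ}
    (A : Fin L → Matrix (Fin n) (Fin n) ℝ)
    (hsym : ∀ ℓ, (A ℓ)ᵀ = A ℓ)
    (f : Matrix (Fin n) (Fin n) ℝ → ℝ)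
    (hf : ∀ Q : Matrix (Fin n) (Fin n) ℝ, f Q =
      ∑ ℓ, ∑ k, ((Qᵀ * A ℓ * Q) k k) ^ 2)
    (g : Matrix (Fin n) (Fin n) ℝ → Matrix (Fin n) (Fin n) ℝ)
    (hg : IsGradR f g)
    (δ : ℝ) (hδ0 : 0 < δ) (hδn : δ < 2 / (n : ℝ))
    (Q : ℕ → Matrix (Fin n) (Fin n) ℝ) (hQ0 : (Q 0)ᵀ * Q 0 = 1)
    (i j : ℕ → Fin n) (θ : ℕ → ℝ)
    (hij : ∀ k, i k < j k)
    (hupd : ∀ k, Q (k + 1) = Q k * givensR n (i k) (j k) (θ k))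
    (hpair : ∀ k, δ * frobR (projGradR g (Q k)) ≤
      |deriv (fun t : ℝ => f (Q k * givensR n (i k) (j k) t)) 0|)
    (hmax : ∀ k t, f (Q k * givensR n (i k) (j k) t) ≤ f (Q (k + 1)))
    (hminabs : ∀ k t, (∀ s, f (Q k * givensR n (i k) (j k) s) ≤
        f (Q k * givensR n (i k) (j k) t)) → |θ k| ≤ |t|) :
    ∃ Qs : Matrix (Fin n) (Fin n) ℝ, Qsᵀ * Qs = 1 ∧
      Tendsto (fun k => frobR (Q k - Qs)) atTop (nhds 0) ∧
      projGradR g Qs = 0 := by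
  have hfF : f = jgF A := by
    funext Q
    rw [hf]
    rfl
  subst hfF
  have hne : ∀ k, i k ≠ j k := fun k => (hij k).ne
  have hO : ∀ k, (Q k)ᵀ * Q k = 1 := by
    intro k
    induction k with
    | zero => exact hQ0
    | succ k ih =>
      rw [hupd k]
      exact jg_orth_mulG (hne k) _ ih
  -- one step
  set α : ℕ → ℝ := fun k => ∑ l, ((jgB (A l) (Q k) (i k) (i k) - jgB (A l) (Q k) (j k) (j k)) ^ 2 -
    4 * (jgB (A l) (Q k) (i k) (j k)) ^ 2) / 4 with hα
  set β : ℕ → ℝ := fun k => jgGam A (Q k) (i k) (j k) with hβ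
  have hform : ∀ k t, jgF A (Q k * givensR n (i k) (j k) t) = jgF A (Q k) +
      (α k * (Real.cos (4 * t) - 1) + β k * Real.sin (4 * t)) := by
    intro k t
    rw [jgF_givens (hne k) A hsym, add_assoc]
  have hnext : ∀ k, jgF A (Q (k + 1)) - jgF A (Q k) =
      α k * (Real.cos (4 * θ k) - 1) + β k * Real.sin (4 * θ k) := by
    intro k
    rw [hupd k, hform]
    ring
  have hone := fun k => jg_oned (α k) (β k) (θ k)
    (by
      intro t
      have h := hmax k t
      rw [hupd k, hform, hform] at h
      linarith)
    (by
      intro t ht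
      refine hminabs k t fun s => ?_
      rw [hform, hform]
      linarith [ht s])
  simp only [← hnext] at hone
  have hmono : Monotone fun k => jgF A (Q k) := by
    refine monotone_nat_of_le_succ fun k => ?_
    have h1 := (hone k).1
    have h2 : 0 ≤ |β k| * |θ k| := by positivity
    linarith
  set C0 := ∑ l, ∑ _k : Fin n, (∑ x, ∑ y, |A l x y|) ^ 2 with hC0
  have hbd : ∀ k, jgF A (Q k) ≤ C0 := fun k => jgF_bdd A (hO k)
  have hlim := tendsto_atTop_ciSup hmono ⟨C0, by rintro _ ⟨k, rfl⟩; exact hbd k⟩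
  set fs := ⨆ k, jgF A (Q k) with hfs
  have hle : ∀ k, jgF A (Q k) ≤ fs := fun k => hmono.ge_of_tendsto hlim k
  -- gradient comparison
  have hGam : ∀ k a b, |jgGam A (Q k) a b| ≤ 2 / δ * |β k| := by
    intro k a b
    have h1 := hpair k
    rw [jgF_givens_deriv (hne k) A hsym, jg_proj_eq A hsym g hg] at h1
    have h2 := jg_frob_ge (hO k) (Matrix.of fun a b => -2 * jgGam A (Q k) a b) a b
    rw [Matrix.of_apply, abs_mul, abs_neg, abs_of_pos (by norm_num : (0 : ℝ) < 2)] at h2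
    rw [abs_mul, abs_of_pos (by norm_num : (0 : ℝ) < 4)] at h1
    have h3 := (mul_le_mul_of_nonneg_left h2 hδ0.le).trans h1
    rw [div_mul_eq_mul_div, le_div_iff₀ hδ0]
    linarith
  obtain ⟨ε, hε, hε1, η, hη, hKL⟩ := jg_KL A hsym fs
  have hnpos : 0 < n := Fin.pos (i 0)
  have hsum : Summable fun k => |θ k| := by
    have hnr : (0 : ℝ) < n := Nat.cast_pos.mpr hnpos
    refine jg_summable (fun k => fs - jgF A (Q k)) (fun k => |β k|) θ
      (fun k => sub_nonneg.mpr (hle k)) ?_ ?_ ?_ ?_ ε η (n * (n * (2 / δ))) hε hε1 hη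
      (by positivity) ?_
    · have := hlim.const_sub fs
      rwa [sub_self] at this
    · intro k
      have := (hone k).1
      linarith
    · intro k
      have := hmono (Nat.le_succ k)
      simp only at this
      linarith
    · intro k h
      refine (hone k).2.2 ?_
      linarith
    · intro k h1 h2
      have h3 : |jgF A (Q k) - fs| = fs - jgF A (Q k) := by
        rw [abs_sub_comm, abs_of_pos h1]
      have h4 := hKL (Q k) (hO k) (by rw [h3]; exact h1) (by rw [h3]; exact h2)
      rw [h3] at h4
      refine h4.trans ?_
      calc ∑ a, ∑ b, |jgGam A (Q k) a b| ≤ ∑ _a : Fin n, ∑ _b : Fin n, 2 / δ * |β k| :=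
            Finset.sum_le_sum fun a _ => Finset.sum_le_sum fun b _ => hGam k a b
        _ = n * (n * (2 / δ)) * |β k| := by
            simp only [Finset.sum_const, Finset.card_univ, Fintype.card_fin, nsmul_eq_mul]
            ring
  -- convergence
  have hconv : ∀ a b, ∃ x, Tendsto (fun k => Q k a b) atTop (nhds x) := by
    intro a b
    refine cauchySeq_tendsto_of_complete ?_
    refine cauchySeq_of_dist_le_of_summable (fun k => 2 * |θ k|) (fun k => ?_) (hsum.mul_left 2)
    rw [dist_comm, Real.dist_eq]
    have h := jg_step_le (hne k) (θ k) (hO k) a b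
    rwa [← hupd k] at h
  choose Qs hQs using hconv
  have hQlim : Tendsto Q atTop (nhds (Qs : Matrix (Fin n) (Fin n) ℝ)) :=
    tendsto_pi_nhds.mpr fun a => tendsto_pi_nhds.mpr fun b => hQs a b
  have hQsO : (Matrix.of Qs)ᵀ * Matrix.of Qs = 1 := by
    have hc : Continuous fun M : Matrix (Fin n) (Fin n) ℝ => Mᵀ * M :=
      continuous_id.matrix_transpose.matrix_mul continuous_id
    have h1 := (hc.tendsto (Matrix.of Qs)).comp hQlim
    have h2 : ((fun M : Matrix (Fin n) (Fin n) ℝ => Mᵀ * M) ∘ Q) = fun _ => 1 := funext hO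
    rw [h2] at h1
    exact tendsto_nhds_unique h1 tendsto_const_nhds |>.symm ▸ rfl
  refine ⟨Matrix.of Qs, hQsO, ?_, ?_⟩
  · unfold frobR
    have h1 : Tendsto (fun k => ∑ a, ∑ b, ((Q k - Matrix.of Qs) a b) ^ 2) atTop
        (nhds (∑ _a : Fin n, ∑ _b : Fin n, (0 : ℝ) ^ 2)) := by
      refine tendsto_finsetSum _ fun a _ => tendsto_finsetSum _ fun b _ => ?_
      have h2 := ((hQs a b).sub_const (Qs a b)).pow 2
      rw [sub_self] at h2
      exact h2
    have h3 := h1.sqrt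
    simpa using h3
  · have hβ0 : Tendsto β atTop (nhds 0) := by
      have hI : Tendsto (fun k => jgF A (Q (k + 1)) - jgF A (Q k)) atTop (nhds 0) := by
        have := ((tendsto_add_atTop_iff_nat 1).mpr hlim).sub hlim
        rwa [sub_self] at this
      have hsq : Tendsto (fun k => β k ^ 2) atTop (nhds 0) := by
        refine squeeze_zero (fun k => sq_nonneg _) (fun k => ?_)
          (by simpa using hI.const_mul (2 * C0))
        refine (hone k).2.1.trans ?_
        have h0 : 0 ≤ jgF A (Q (k + 1)) - jgF A (Q k) := sub_nonneg.mpr (hmono (Nat.le_succ k))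
        refine mul_le_mul_of_nonneg_right ?_ h0
        have h1 := hform k (Real.pi / 4)
        have e : 4 * (Real.pi / 4) = Real.pi := by ring
        rw [e, Real.cos_pi, Real.sin_pi] at h1
        have h2 := jgF_nonneg A (Q k * givensR n (i k) (j k) (Real.pi / 4))
        have h3 := hbd (k + 1)
        have h4 := jgF_nonneg A (Q k)
        nlinarith
      have h := hsq.sqrt
      simp only [Real.sqrt_sq_eq_abs, Real.sqrt_zero] at h
      exact (tendsto_zero_iff_abs_tendsto_zero _).mpr h
    have hG0 : ∀ a b, jgGam A (Matrix.of Qs) a b = 0 := by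
      intro a b
      have h1 := ((jgGam_cont A a b).tendsto (Matrix.of Qs)).comp hQlim
      refine tendsto_nhds_unique h1 ?_
      have h2 : Tendsto (fun k => 2 / δ * |β k|) atTop (nhds 0) := by
        simpa using hβ0.abs.const_mul (2 / δ)
      exact squeeze_zero_norm (fun k => hGam k a b) h2
    rw [jg_proj_eq A hsym g hg]
    have : (Matrix.of fun a b => -2 * jgGam A (Matrix.of Qs) a b) =
        (0 : Matrix (Fin n) (Fin n) ℝ) := by
      ext a b
      simp [hG0]
    rw [this, Matrix.mul_zero]
end

section
/- Let f(U) = Σ_{ℓ=1}^L α_ℓ Σ_{k=1}^n |W^(ℓ)(U)_{k⋯k}|², where for each ℓ, W^(ℓ)(U)_{k₁⋯k_{d_ℓ}} = Σ_{a₁,…,a_{d_ℓ}} A^(ℓ)_{a₁⋯a_{d_ℓ}} ∏_{p=1}^{t_ℓ} conj(U_{a_p k_p}) ∏_{p=t_ℓ+1}^{d_ℓ} U_{a_p k_p}, and set d = max(d₁,…,d_L). Then there exists a Hermitian complex tensor B of order 2d such that for all U ∈ U(n), f(U) equals the trace form of B at U, i.e. f(U) = Σ_{k=1}^n Σ_{i₁,…,i_d,j₁,…,j_d}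 B_{i₁⋯i_d j₁⋯j_d} ∏_{m=1}^d conj(U_{i_m k}) ∏_{m=1}^d U_{j_m k}. -/
open Matrix BigOperators Filter

/-- The function `g` on unit vectors is given by a tensor of order `2d`. -/
def HasForm {n : ℕ} (d : ℕ) (g : (Fin n → ℂ) → ℂ) : Prop :=
  ∃ B : (Fin d → Fin n) → (Fin d → Fin n) → ℂ, ∀ u : Fin n → ℂ,
    (∑ i, (starRingEnd ℂ) (u i) * u i = 1) →
    g u = ∑ iv : Fin d → Fin n, ∑ jv : Fin d → Fin n,
      B iv jv * (∏ m, (starRingEnd ℂ) (u (iv m))) * ∏ m, u (jv m)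

theorem HasForm.smul {n d : ℕ} {g : (Fin n → ℂ) → ℂ} (h : HasForm d g) (c : ℂ) :
    HasForm d (fun u => c * g u) := by
  obtain ⟨B, hB⟩ := h
  refine ⟨fun i j => c * B i j, fun u hu => ?_⟩
  simp only [hB u hu, Finset.mul_sum, mul_assoc]

theorem HasForm.sum {n d : ℕ} {ι : Type*} [Fintype ι] {g : ι → (Fin n → ℂ) → ℂ}
    (h : ∀ x, HasForm d (g x)) : HasForm d (fun u => ∑ x, g x u) := by
  choose B hB using h
  refine ⟨fun i j => ∑ x, B x i j, fun u hu => ?_⟩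
  simp only [hB _ u hu, Finset.sum_mul]
  rw [Finset.sum_comm]
  refine Finset.sum_congr rfl fun i _ => ?_
  rw [Finset.sum_comm]

theorem HasForm.prod {n d : ℕ} (c : Fin d → Fin n → Fin n → ℂ) :
    HasForm d (fun u => ∏ m, ∑ i, ∑ j, c m i j * (starRingEnd ℂ) (u i) * u j) := by
  refine ⟨fun iv jv => ∏ m, c m (iv m) (jv m), fun u _ => ?_⟩
  simp only [Finset.prod_univ_sum, Fintype.piFinset_univ, Finset.prod_mul_distrib]

theorem HasForm.monomial {n e d : ℕ} (hed : e ≤ d) (P Q : Fin e → Fin n) :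
    HasForm d (fun u => ∏ p, ((starRingEnd ℂ) (u (P p)) * u (Q p))) := by
  obtain ⟨r, rfl⟩ := Nat.exists_eq_add_of_le hed
  obtain ⟨B, hB⟩ := HasForm.prod (n := n) (d := e + r)
    (Fin.append (fun p i j => if i = P p then (if j = Q p then (1 : ℂ) else 0) else 0)
      (fun _ i j => if j = i then (1 : ℂ) else 0))
  refine ⟨B, fun u hu => ?_⟩
  rw [← hB u hu]
  beta_reduce
  rw [Fin.prod_univ_add]
  simp [ite_mul, hu]

theorem HasForm.normSq {n e d : ℕ} (hed : e ≤ d) (t : ℕ) (A : (Fin e → Fin n) → ℂ) :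
    HasForm d (fun u => ((Complex.normSq (∑ a : Fin e → Fin n, A a *
          ∏ p : Fin e, (if (p : ℕ) < t then (starRingEnd ℂ) (u (a p))
            else u (a p))) : ℝ) : ℂ)) := by
  have h : HasForm d (fun u : Fin n → ℂ => ∑ a : Fin e → Fin n, ∑ b : Fin e → Fin n,
      (A a * (starRingEnd ℂ) (A b)) *
        ∏ p : Fin e, ((starRingEnd ℂ) (u (if (p : ℕ) < t then a p else b p)) *
          u (if (p : ℕ) < t then b p else a p))) :=
    HasForm.sum fun a => HasForm.sum fun b => (HasForm.monomial hed _ _).smul _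
  convert h using 2 with u
  rw [Complex.normSq_eq_conj_mul_self, mul_comm, map_sum, Finset.sum_mul_sum]
  refine Finset.sum_congr rfl fun a _ => Finset.sum_congr rfl fun b _ => ?_
  rw [map_mul, map_prod, mul_mul_mul_comm, ← Finset.prod_mul_distrib]
  congr 1
  refine Finset.prod_congr rfl fun p _ => ?_
  split_ifs
  · simp
  · rw [mul_comm]

/-- Existence of a Hermitian tensor representation: the ICA cost function
`f(U) = Σ_ℓ α_ℓ Σ_k |W^(ℓ)(U)_{k⋯k}|²` admits, with `d = max(d₁,…,d_L)`, a Hermitian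
complex tensor `B` of order `2d` (indexed by `(i₁,…,i_d,j₁,…,j_d)`, with
`B_{i⃗ j⃗} = conj(B_{j⃗ i⃗})`) such that for all unitary `U`,
`f(U) = Σ_k Σ_{i⃗,j⃗} B_{i⃗ j⃗} Π_m conj(U_{i_m k}) Π_m U_{j_m k}`. -/
theorem exists_hermitian_trace_form {n L : ℕ}
    (dl tl : Fin L → ℕ) (htd : ∀ ℓ, tl ℓ ≤ dl ℓ) (hdl : ∀ ℓ, 1 ≤ dl ℓ)
    (α : Fin L → ℝ)
    (A : (ℓ : Fin L) → ((Fin (dl ℓ) → Fin n) → ℂ))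
    (f : Matrix (Fin n) (Fin n) ℂ → ℝ)
    (hf : ∀ U : Matrix (Fin n) (Fin n) ℂ, f U =
      ∑ ℓ, α ℓ * ∑ k : Fin n, Complex.normSq
        (∑ a : Fin (dl ℓ) → Fin n, A ℓ a *
          ∏ p : Fin (dl ℓ), (if (p : ℕ) < tl ℓ then (starRingEnd ℂ) (U (a p) k)
            else U (a p) k)))
    (d : ℕ) (hdmax : d = Finset.univ.sup dl) :
    ∃ B : (Fin d → Fin n) → (Fin d → Fin n) → ℂ,
      (∀ iv jv, B iv jv = (starRingEnd ℂ) (B jv iv)) ∧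
      ∀ U : Matrix (Fin n) (Fin n) ℂ, Uᴴ * U = 1 →
        (f U : ℂ) = ∑ k : Fin n, ∑ iv : Fin d → Fin n, ∑ jv : Fin d → Fin n,
          B iv jv * (∏ m, (starRingEnd ℂ) (U (iv m) k)) * ∏ m, U (jv m) k := by
  have hform : HasForm d (fun u : Fin n → ℂ => ∑ ℓ, (α ℓ : ℂ) *
      ((Complex.normSq (∑ a : Fin (dl ℓ) → Fin n, A ℓ a *
          ∏ p : Fin (dl ℓ), (if (p : ℕ) < tl ℓ then (starRingEnd ℂ) (u (a p))
            else u (a p))) : ℝ) : ℂ)) :=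
    HasForm.sum fun ℓ => (HasForm.normSq
      (hdmax ▸ Finset.le_sup (f := dl) (Finset.mem_univ ℓ)) _ _).smul _
  obtain ⟨B, hB⟩ := hform
  refine ⟨fun i j => (B i j + (starRingEnd ℂ) (B j i)) / 2, fun i j => ?_, fun U hU => ?_⟩
  · simp [add_comm, Complex.conj_ofNat]
  have hcol : ∀ k, ∑ i, (starRingEnd ℂ) (U i k) * U i k = 1 := fun k => by
    have := congrFun (congrFun hU k) k
    simpa [Matrix.mul_apply] using this
  have h1 : (f U : ℂ) = ∑ k : Fin n, ∑ iv : Fin d → Fin n, ∑ jv : Fin d → Fin n,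
          B iv jv * (∏ m, (starRingEnd ℂ) (U (iv m) k)) * ∏ m, U (jv m) k := by
    rw [Finset.sum_congr rfl fun k _ => (hB (fun i => U i k) (hcol k)).symm, hf,
      Finset.sum_comm]
    push_cast
    simp only [Finset.mul_sum]
  have h2 : (f U : ℂ) = ∑ k : Fin n, ∑ iv : Fin d → Fin n, ∑ jv : Fin d → Fin n,
      (starRingEnd ℂ) (B jv iv) * (∏ m, (starRingEnd ℂ) (U (iv m) k)) * ∏ m, U (jv m) k := by
    rw [← Complex.conj_ofReal (f U), h1]
    simp only [map_sum, map_mul, map_prod, Complex.conj_conj]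
    refine Finset.sum_congr rfl fun k _ => ?_
    rw [Finset.sum_comm]
    refine Finset.sum_congr rfl fun a _ => Finset.sum_congr rfl fun b _ => ?_
    ring
  have h3 : (f U : ℂ) = ((f U : ℂ) + (f U : ℂ)) / 2 := by ring
  rw [h3]
  nth_rewrite 1 [h1]
  rw [h2]
  simp only [← Finset.sum_add_distrib, Finset.sum_div]
  refine Finset.sum_congr rfl fun k _ => Finset.sum_congr rfl fun a _ =>
    Finset.sum_congr rfl fun b _ => ?_
  ring
end

section
/- Let d ≤ 3, let B be a Hermitian complex tensor of order 2d, and let f(U) = Σ_{k=1}^n Σ_{i₁,…,i_d,j₁,…,j_d} B_{i₁⋯i_d j₁⋯j_d} ∏_{m=1}^d conj(U_{i_m k}) ∏_{m=1}^d U_{j_m k} be its trace form. Then for every U ∈ U(n) and every pair 1 ≤ i < j ≤ n, there exists a real symmetric 3×3 matrix Γ such that for all c, s₁, s₂ ∈ ℝ with c² + s₁² + s₂² = 1, f(U G(i,j,Ψ(c,s₁,s₂))) = r(c,s₁,s₂)^T Γ r(c,s₁,s₂). -/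
open Matrix BigOperators Filter

/-- Plane transformation `G(i,j,Ψ)`: identity except that the 2×2 submatrix formed
by rows and columns `(i,j)` equals `Ψ`. -/
noncomputable def planeG (n : ℕ) (i j : Fin n) (Ψ : Matrix (Fin 2) (Fin 2) ℂ) :
    Matrix (Fin n) (Fin n) ℂ :=
  fun a b =>
    if a = i ∧ b = i then Ψ 0 0
    else if a = i ∧ b = j then Ψ 0 1
    else if a = j ∧ b = i then Ψ 1 0
    else if a = j ∧ b = j then Ψ 1 1
    else if a = b then 1 else 0

/-- The 2×2 unitary matrix `Ψ(c,s₁,s₂) = [[c, −(s₁+is₂)], [s₁−is₂, c]]`. -/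
noncomputable def PsiM (c s₁ s₂ : ℝ) : Matrix (Fin 2) (Fin 2) ℂ :=
  !![(c : ℂ), -((s₁ : ℂ) + (s₂ : ℂ) * Complex.I);
     (s₁ : ℂ) - (s₂ : ℂ) * Complex.I, (c : ℂ)]

/-- The vector `r(c,s₁,s₂) = (2c²−1, −2cs₁, −2cs₂)`. -/
noncomputable def rVec (c s₁ s₂ : ℝ) : Fin 3 → ℝ :=
  ![2 * c ^ 2 - 1, -(2 * c * s₁), -(2 * c * s₂)]

/-- Complex quadratic forms in `r`, on the sphere. -/
def IsQ (F : ℝ → ℝ → ℝ → ℂ) : Prop :=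
  ∃ A B C D E G : ℂ, ∀ c s₁ s₂ : ℝ, c ^ 2 + s₁ ^ 2 + s₂ ^ 2 = 1 →
    F c s₁ s₂ = A * (rVec c s₁ s₂ 0 : ℂ) ^ 2 + B * (rVec c s₁ s₂ 1 : ℂ) ^ 2
      + C * (rVec c s₁ s₂ 2 : ℂ) ^ 2
      + D * ((rVec c s₁ s₂ 0 : ℂ) * (rVec c s₁ s₂ 1 : ℂ))
      + E * ((rVec c s₁ s₂ 0 : ℂ) * (rVec c s₁ s₂ 2 : ℂ))
      + G * ((rVec c s₁ s₂ 1 : ℂ) * (rVec c s₁ s₂ 2 : ℂ))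

lemma IsQ.add {F F' : ℝ → ℝ → ℝ → ℂ} (h : IsQ F) (h' : IsQ F') :
    IsQ (fun c s t => F c s t + F' c s t) := by
  obtain ⟨A, B, C, D, E, G, h⟩ := h
  obtain ⟨A', B', C', D', E', G', h'⟩ := h'
  refine ⟨A + A', B + B', C + C', D + D', E + E', G + G', fun c s t hc => ?_⟩
  beta_reduce
  rw [h c s t hc, h' c s t hc]; ring

lemma IsQ.smul {F : ℝ → ℝ → ℝ → ℂ} (z : ℂ) (h : IsQ F) :
    IsQ (fun c s t => z * F c s t) := by
  obtain ⟨A, B, C, D, E, G, h⟩ := h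
  refine ⟨z * A, z * B, z * C, z * D, z * E, z * G, fun c s t hc => ?_⟩
  beta_reduce
  rw [h c s t hc]; ring

lemma IsQ.congr {F F' : ℝ → ℝ → ℝ → ℂ} (h : IsQ F)
    (e : ∀ c s t : ℝ, c ^ 2 + s ^ 2 + t ^ 2 = 1 → F' c s t = F c s t) : IsQ F' := by
  obtain ⟨A, B, C, D, E, G, h⟩ := h
  exact ⟨A, B, C, D, E, G, fun c s t hc => by rw [e c s t hc, h c s t hc]⟩

lemma IsQ.const (z : ℂ) : IsQ (fun _ _ _ => z) := by
  refine ⟨z, z, z, 0, 0, 0, fun c s t hc => ?_⟩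
  have h : (c : ℂ) ^ 2 + (s : ℂ) ^ 2 + (t : ℂ) ^ 2 = 1 := by exact_mod_cast hc
  simp only [rVec]
  simp
  linear_combination (-4 * z * (c : ℂ) ^ 2) * h

lemma IsQ.sum {ι : Type*} (S : Finset ι) (F : ι → ℝ → ℝ → ℝ → ℂ) (h : ∀ x ∈ S, IsQ (F x)) :
    IsQ (fun c s t => ∑ x ∈ S, F x c s t) := by
  classical
  induction S using Finset.induction_on with
  | empty => simpa using IsQ.const 0
  | insert a S ha ih =>
    refine IsQ.congr (IsQ.add (h a (by simp)) (ih fun x hx => h x (by simp [hx]))) ?_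
    intro c s t _
    rw [Finset.sum_insert ha]

/-- Linear form in `r`. -/
noncomputable def linR (l : Fin 3 → ℂ) (c s t : ℝ) : ℂ :=
  l 0 * (rVec c s t 0 : ℂ) + l 1 * (rVec c s t 1 : ℂ) + l 2 * (rVec c s t 2 : ℂ)

lemma IsQ.lin_mul (l m : Fin 3 → ℂ) : IsQ (fun c s t => linR l c s t * linR m c s t) := by
  refine ⟨l 0 * m 0, l 1 * m 1, l 2 * m 2, l 0 * m 1 + l 1 * m 0, l 0 * m 2 + l 2 * m 0,
    l 1 * m 2 + l 2 * m 1, fun c s t _ => ?_⟩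
  simp only [linR]; ring

lemma IsQ.prod_pair {d : ℕ} (hd : d ≤ 3) (a : Fin d → ℂ) (l : Fin d → Fin 3 → ℂ) :
    IsQ (fun c s t => ∏ m, (a m + linR (l m) c s t) + ∏ m, (a m - linR (l m) c s t)) := by
  interval_cases d
  · simpa using IsQ.const _
  · refine (IsQ.const (2 * a 0)).congr fun c s t _ => ?_
    simp; ring
  · refine ((IsQ.const (2 * a 0 * a 1)).add ((IsQ.lin_mul (l 0) (l 1)).smul 2)).congr
      fun c s t _ => ?_
    simp [Fin.prod_univ_two]; ring
  · refine ((IsQ.const (2 * a 0 * a 1 * a 2)).add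
      (((IsQ.lin_mul (l 0) (l 1)).smul (2 * a 2)).add
      (((IsQ.lin_mul (l 0) (l 2)).smul (2 * a 1)).add
       ((IsQ.lin_mul (l 1) (l 2)).smul (2 * a 0))))).congr
      fun c s t _ => ?_
    simp [Fin.prod_univ_three]; ring

lemma IsQ.final {F : ℝ → ℝ → ℝ → ℂ} (h : IsQ F) :
    ∃ Γ : Matrix (Fin 3) (Fin 3) ℝ, Γᵀ = Γ ∧
      ∀ c s₁ s₂ : ℝ, c ^ 2 + s₁ ^ 2 + s₂ ^ 2 = 1 →
        (F c s₁ s₂).re = rVec c s₁ s₂ ⬝ᵥ (Γ *ᵥ rVec c s₁ s₂) := by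
  obtain ⟨A, B, C, D, E, G, h⟩ := h
  refine ⟨!![A.re, D.re / 2, E.re / 2; D.re / 2, B.re, G.re / 2; E.re / 2, G.re / 2, C.re],
    ?_, fun c s t hc => ?_⟩
  · ext p q; fin_cases p <;> fin_cases q <;> rfl
  · rw [h c s t hc]
    generalize rVec c s t = r
    simp only [← Complex.ofReal_pow, ← Complex.ofReal_mul, Complex.add_re, Complex.re_mul_ofReal]
    simp [dotProduct, Matrix.mulVec, Fin.sum_univ_three]
    ring

lemma mul_planeG_i {n : ℕ} (U : Matrix (Fin n) (Fin n) ℂ) (i j : Fin n) (hij : i ≠ j)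
    (Ψ : Matrix (Fin 2) (Fin 2) ℂ) (p : Fin n) :
    (U * planeG n i j Ψ) p i = U p i * Ψ 0 0 + U p j * Ψ 1 0 := by
  rw [Matrix.mul_apply, Fintype.sum_eq_add i j hij]
  · simp [planeG, hij, hij.symm]
  · rintro x ⟨h1, h2⟩; simp [planeG, h1, h2]

lemma mul_planeG_j {n : ℕ} (U : Matrix (Fin n) (Fin n) ℂ) (i j : Fin n) (hij : i ≠ j)
    (Ψ : Matrix (Fin 2) (Fin 2) ℂ) (p : Fin n) :
    (U * planeG n i j Ψ) p j = U p i * Ψ 0 1 + U p j * Ψ 1 1 := by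
  rw [Matrix.mul_apply, Fintype.sum_eq_add i j hij]
  · simp [planeG, hij, hij.symm]
  · rintro x ⟨h1, h2⟩; simp [planeG, h1, h2]

lemma mul_planeG_k {n : ℕ} (U : Matrix (Fin n) (Fin n) ℂ) (i j k : Fin n) (hi : k ≠ i)
    (hj : k ≠ j) (Ψ : Matrix (Fin 2) (Fin 2) ℂ) (p : Fin n) :
    (U * planeG n i j Ψ) p k = U p k := by
  rw [Matrix.mul_apply, Fintype.sum_eq_single k]
  · simp [planeG, hi, hj]
  · intro x h1; simp [planeG, h1, hi, hj]

/-- Constant part of `w_p conj w_q`. -/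
noncomputable def aP (u v u' v' : ℂ) : ℂ :=
  (u * (starRingEnd ℂ) u' + v * (starRingEnd ℂ) v') / 2

/-- Linear part of `w_p conj w_q`. -/
noncomputable def lP (u v u' v' : ℂ) : Fin 3 → ℂ :=
  ![(u * (starRingEnd ℂ) u' - v * (starRingEnd ℂ) v') / 2,
    -(u * (starRingEnd ℂ) v' + v * (starRingEnd ℂ) u') / 2,
    -(Complex.I * (u * (starRingEnd ℂ) v' - v * (starRingEnd ℂ) u')) / 2]

lemma col_i (u v u' v' : ℂ) (c s t : ℝ) (hc : c ^ 2 + s ^ 2 + t ^ 2 = 1) :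
    (starRingEnd ℂ) (u' * PsiM c s t 0 0 + v' * PsiM c s t 1 0) *
      (u * PsiM c s t 0 0 + v * PsiM c s t 1 0) = aP u v u' v' + linR (lP u v u' v') c s t := by
  have h : (c : ℂ) ^ 2 + (s : ℂ) ^ 2 + (t : ℂ) ^ 2 = 1 := by exact_mod_cast hc
  simp [PsiM, aP, lP, linR, rVec]
  linear_combination (v * (starRingEnd ℂ) v') * h
    - (v * (starRingEnd ℂ) v' * (t : ℂ) ^ 2) * Complex.I_sq

lemma col_j (u v u' v' : ℂ) (c s t : ℝ) (hc : c ^ 2 + s ^ 2 + t ^ 2 = 1) :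
    (starRingEnd ℂ) (u' * PsiM c s t 0 1 + v' * PsiM c s t 1 1) *
      (u * PsiM c s t 0 1 + v * PsiM c s t 1 1) = aP u v u' v' - linR (lP u v u' v') c s t := by
  have h : (c : ℂ) ^ 2 + (s : ℂ) ^ 2 + (t : ℂ) ^ 2 = 1 := by exact_mod_cast hc
  simp [PsiM, aP, lP, linR, rVec]
  linear_combination (u * (starRingEnd ℂ) u') * h
    - (u * (starRingEnd ℂ) u' * (t : ℂ) ^ 2) * Complex.I_sq

/-- For `d ≤ 3` and a Hermitian tensor `B` of order `2d` with trace form `f`, the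
restriction of `f` to any plane `(i,j)` at any unitary `U` is a quadratic form:
`f(U G(i,j,Ψ(c,s₁,s₂))) = r(c,s₁,s₂)ᵀ Γ r(c,s₁,s₂)` for some real symmetric
3×3 matrix `Γ`. -/
theorem trace_form_plane_restriction_quadratic {n d : ℕ} (hd : d ≤ 3)
    (B : (Fin d → Fin n) → (Fin d → Fin n) → ℂ)
    (hB : ∀ iv jv, B iv jv = (starRingEnd ℂ) (B jv iv))
    (f : Matrix (Fin n) (Fin n) ℂ → ℝ)
    (hf : ∀ U : Matrix (Fin n) (Fin n) ℂ, f U =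
      (∑ k : Fin n, ∑ iv : Fin d → Fin n, ∑ jv : Fin d → Fin n,
        B iv jv * (∏ m, (starRingEnd ℂ) (U (iv m) k)) * ∏ m, U (jv m) k).re)
    (U : Matrix (Fin n) (Fin n) ℂ) (hU : Uᴴ * U = 1)
    (i j : Fin n) (hij : i < j) :
    ∃ Γ : Matrix (Fin 3) (Fin 3) ℝ, Γᵀ = Γ ∧
      ∀ c s₁ s₂ : ℝ, c ^ 2 + s₁ ^ 2 + s₂ ^ 2 = 1 →
        f (U * planeG n i j (PsiM c s₁ s₂)) =
          rVec c s₁ s₂ ⬝ᵥ (Γ *ᵥ rVec c s₁ s₂) := by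
  have hne : i ≠ j := hij.ne
  simp only [hf]
  refine IsQ.final (F := fun c s₁ s₂ => ∑ k : Fin n, ∑ iv : Fin d → Fin n, ∑ jv : Fin d → Fin n,
        B iv jv * (∏ m, (starRingEnd ℂ) ((U * planeG n i j (PsiM c s₁ s₂)) (iv m) k)) *
          ∏ m, (U * planeG n i j (PsiM c s₁ s₂)) (jv m) k) ?_
  have key : IsQ (fun c s t => ∑ iv : Fin d → Fin n, ∑ jv : Fin d → Fin n, B iv jv *
      (∏ m, (aP (U (jv m) i) (U (jv m) j) (U (iv m) i) (U (iv m) j) +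
          linR (lP (U (jv m) i) (U (jv m) j) (U (iv m) i) (U (iv m) j)) c s t) +
        ∏ m, (aP (U (jv m) i) (U (jv m) j) (U (iv m) i) (U (iv m) j) -
          linR (lP (U (jv m) i) (U (jv m) j) (U (iv m) i) (U (iv m) j)) c s t))) :=
    IsQ.sum _ _ fun iv _ => IsQ.sum _ _ fun jv _ => (IsQ.prod_pair hd _ _).smul _
  refine (key.add (IsQ.const (∑ k ∈ (Finset.univ.erase i).erase j,
    ∑ iv : Fin d → Fin n, ∑ jv : Fin d → Fin n,
        B iv jv * (∏ m, (starRingEnd ℂ) (U (iv m) k)) * ∏ m, U (jv m) k))).congr ?_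
  intro c s t hc
  rw [← Finset.add_sum_erase _ _ (Finset.mem_univ i),
    ← Finset.add_sum_erase _ _ (show j ∈ Finset.univ.erase i by simp [hne.symm]), ← add_assoc]
  congr 1
  · simp only [← Finset.sum_add_distrib]
    refine Finset.sum_congr rfl fun iv _ => Finset.sum_congr rfl fun jv _ => ?_
    simp only [mul_assoc, ← Finset.prod_mul_distrib, mul_planeG_i U i j hne,
      mul_planeG_j U i j hne, col_i _ _ _ _ c s t hc, col_j _ _ _ _ c s t hc]
    ring
  · refine Finset.sum_congr rfl fun k hk => ?_
    simp only [Finset.mem_erase] at hk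
    simp only [mul_planeG_k U i j k hk.2.1 hk.1]
end
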